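/- arXiv:2503.03899 — 2 statements merged into one kernel-verified Lean document; each statement's English description precedes it below -/
import Mathlib

section
/- The limit as n → ∞ of P_n({λ ∈ D_n : |Σ_{k_n < k ≤ K_n} 2·X_k(λ)/k − log(K_n/k_n)| ≤ n^{−1/11}}) equals 1. -/
/-!
Put `S = (kn n, Kn n]` and split a distinct parts partition of `n` into its set `B` of parts in `S`
and the remaining parts. If `B` has sum `s`, there are `a s = #(avoiding S (n - s))` completions,
so `B` has the law of a uniform random subset of `S` reweighted by `a s`. Under the uniform law,
`∑ 2 X_k / k = ∑ 1 / k + T`, where `T = ∑ ± 1 / k` is a Rademacher sum with variance proxy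
`∑ 1 / k ^ 2 ≤ 1 / kn n`, about `n ^ (-1/5)`. Hence `T` exceeds `n ^ (-1/11) / 2` only with
probability smaller than every power of `n`, and it remains to see that the reweighting costs
little.

Two combinatorial facts control `a`. It is nonincreasing in `s` (`avoiding_card_mono`: enlarge the
largest part). It grows slowly (`avoiding_card_step`): if `h ^ 2` is at most the number being
partitioned, a partition must have a part `≥ h`, so deleting such a part shows that lowering the
number partitioned by `h` costs at most a factor `n`. With `h` of order `√n` this gives
`a s ≤ a s₀ * n * (1 + exp (b * (s₀ - s)))`, where `b = 2 log n / √n` and `s₀` is half of `∑ S`.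
Since `∑ k ^ 2` over `S` is at most `(Kn n) ^ 3 ≤ n`, the exponential moment of `b * (s₀ - s)`
is only `exp (O (log n ^ 2))`.

A Chernoff bound for `T` and `s` jointly (`weighted_deviation`) with parameter `t = n ^ (1/10)`
bounds the probability of deviation by `errBound n`, whose main factor is
`exp (-(n ^ (1/110)) / 2)`. Finally `∑ 1 / k` over `S` is within `1 / kn n` of `log (Kn n / kn n)`.
-/

open scoped BigOperators
open Filter

/-- The uniform probability (as a real number) that a distinct parts partition of `n`
satisfies the predicate `p`. -/
noncomputable def Pn (n : ℕ) (p : Nat.Partition n → Prop) : ℝ :=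
  letI := Classical.decPred p
  (((Nat.Partition.distincts n).filter p).card : ℝ) / ((Nat.Partition.distincts n).card : ℝ)

/-- `X k lam` is the multiplicity of the part `k` in the partition `lam`. -/
def X {n : ℕ} (lam : Nat.Partition n) (k : ℕ) : ℕ := Multiset.count k lam.parts

/-- `kn n = ⌊n^(1/5)⌋`. -/
noncomputable def kn (n : ℕ) : ℕ := ⌊(n : ℝ) ^ ((1 : ℝ) / 5)⌋₊

/-- `Kn n = ⌊n^(1/3)⌋`. -/
noncomputable def Kn (n : ℕ) : ℕ := ⌊(n : ℝ) ^ ((1 : ℝ) / 3)⌋₊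

/-! ### Counting partitions that avoid a set of parts -/

/-- Finite sets of positive integers avoiding `S` with sum `m`, i.e. distinct parts partitions
of `m` without a part in `S`. -/
def avoiding (S : Finset ℕ) (m : ℕ) : Finset (Finset ℕ) :=
  (Finset.Icc 1 m \ S).powerset.filter (fun A => ∑ i ∈ A, i = m)

lemma mem_avoiding {S : Finset ℕ} {m : ℕ} {A : Finset ℕ} :
    A ∈ avoiding S m ↔ (∀ i ∈ A, 1 ≤ i ∧ i ∉ S) ∧ ∑ i ∈ A, i = m := by
  unfold avoiding
  simp only [Finset.mem_filter, Finset.mem_powerset]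
  constructor
  · rintro ⟨h, hs⟩
    refine ⟨fun i hi => ?_, hs⟩
    have := h hi
    simp only [Finset.mem_sdiff, Finset.mem_Icc] at this
    exact ⟨this.1.1, this.2⟩
  · rintro ⟨h, hs⟩
    refine ⟨fun i hi => ?_, hs⟩
    simp only [Finset.mem_sdiff, Finset.mem_Icc]
    refine ⟨⟨(h i hi).1, ?_⟩, (h i hi).2⟩
    rw [← hs]
    exact Finset.single_le_sum (f := fun i => i) (fun _ _ => Nat.zero_le _) hi

lemma sum_le_of_forall_lt {A : Finset ℕ} {h : ℕ} (hA : ∀ i ∈ A, i < h) :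
    ∑ i ∈ A, i ≤ h * (h - 1) := by
  calc ∑ i ∈ A, i ≤ ∑ i ∈ Finset.range h, i :=
        Finset.sum_le_sum_of_subset (fun i hi => Finset.mem_range.2 (hA i hi))
    _ ≤ h * (h - 1) := by rw [Finset.sum_range_id]; exact Nat.div_le_self _ _

/-- Enlarging the largest part by `m - j` is injective, and the new part lies beyond `S`. -/
lemma avoiding_card_mono {S : Finset ℕ} {K j m : ℕ} (hS : ∀ k ∈ S, k ≤ K) (hjm : j ≤ m)
    (hm : 2 * (K + 1) ^ 2 ≤ m) : (avoiding S j).card ≤ (avoiding S m).card := by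
  set φ : Finset ℕ → Finset ℕ := fun A => insert (A.sup id + (m - j)) (A.erase (A.sup id))
    with hφ
  set ψ : Finset ℕ → Finset ℕ :=
    fun C => (insert (C.sup id - (m - j)) (C.erase (C.sup id))).erase 0 with hψ
  have hlt : ∀ A : Finset ℕ, ∀ i ∈ A.erase (A.sup id), i < A.sup id := by
    intro A i hi
    obtain ⟨h1, h2⟩ := Finset.mem_erase.1 hi
    exact lt_of_le_of_ne (Finset.le_sup (f := id) h2) h1
  have hnot : ∀ A : Finset ℕ, A.sup id + (m - j) ∉ A.erase (A.sup id) := by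
    intro A hA
    have := hlt A _ hA
    omega
  have hsup : ∀ A : Finset ℕ, (φ A).sup id = A.sup id + (m - j) := by
    intro A
    simp only [hφ, Finset.sup_insert, id]
    refine sup_eq_left.2 (Finset.sup_le fun i hi => ?_)
    have := hlt A i hi
    simp only [id]
    omega
  apply Finset.card_le_card_of_injOn φ
  · intro A hA
    obtain ⟨hA1, hA2⟩ := mem_avoiding.1 hA
    refine mem_avoiding.2 ⟨fun i hi => ?_, ?_⟩
    · rcases Finset.mem_insert.1 hi with rfl | hi
      · have hK : K < A.sup id + (m - j) := by
          by_contra hcon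
          have h1 : ∑ i ∈ A, i ≤ (K + 1) * (K + 1 - 1) := by
            apply sum_le_of_forall_lt
            intro i hi
            have := Finset.le_sup (f := id) hi
            simp only [id] at this
            omega
          rw [hA2] at h1
          simp only [Nat.add_sub_cancel] at h1
          have h2 : m - j ≤ K := by omega
          have h3 : m ≤ (K + 1) * K + K := by omega
          nlinarith
        exact ⟨by omega, fun hmem => absurd (hS _ hmem) (by omega)⟩
      · exact hA1 i (Finset.mem_of_mem_erase hi)
    · simp only [hφ]
      rw [Finset.sum_insert (hnot A)]
      rcases A.eq_empty_or_nonempty with rfl | hne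
      · simp at hA2 ⊢
        omega
      · have hmem : A.sup id ∈ A := by
          obtain ⟨x, hx, hx'⟩ := Finset.exists_mem_eq_sup A hne id
          rw [hx']; exact hx
        have := Finset.add_sum_erase A (fun i => i) hmem
        omega
  · have hleft : ∀ A ∈ avoiding S j, ψ (φ A) = A := by
      intro A hA
      obtain ⟨hA1, hA2⟩ := mem_avoiding.1 hA
      have h0 : 0 ∉ A := fun h => by have := (hA1 0 h).1; omega
      simp only [hψ]
      rw [hsup, Nat.add_sub_cancel]
      simp only [hφ]
      rw [Finset.erase_insert (hnot A)]
      rcases A.eq_empty_or_nonempty with rfl | hne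
      · simp
      · have hmem : A.sup id ∈ A := by
          obtain ⟨x, hx, hx'⟩ := Finset.exists_mem_eq_sup A hne id
          rw [hx']; exact hx
        rw [Finset.insert_erase hmem, Finset.erase_eq_of_notMem h0]
    intro A hA B hB hAB
    rw [← hleft A hA, ← hleft B hB, hAB]

/-- A set of sum at least `h ^ 2` has a member `a ≥ h`; deleting it lands at sum at most `m`. -/
lemma avoiding_card_step {S : Finset ℕ} {K m y h : ℕ} (hS : ∀ k ∈ S, k ≤ K)
    (hm : 2 * (K + 1) ^ 2 ≤ m) (hh : 1 ≤ h) (hyh : y ≤ h) (hhm : h * h ≤ m + y) :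
    (avoiding S (m + y)).card ≤ (m + y) * (avoiding S m).card := by
  have hsub : avoiding S (m + y) ⊆ (Finset.Icc h (m + y)).biUnion
      (fun a => (avoiding S (m + y - a)).image (insert a)) := by
    intro A hA
    obtain ⟨hA1, hA2⟩ := mem_avoiding.1 hA
    have hex : ∃ a ∈ A, h ≤ a := by
      by_contra! hcon
      have := sum_le_of_forall_lt hcon
      obtain ⟨g, rfl⟩ : ∃ g, h = g + 1 := ⟨h - 1, by omega⟩
      simp only [Nat.add_sub_cancel] at this
      nlinarith
    obtain ⟨a, ha, hha⟩ := hex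
    have hsum := Finset.add_sum_erase A (fun i => i) ha
    simp only [Finset.mem_biUnion, Finset.mem_Icc, Finset.mem_image]
    refine ⟨a, ⟨hha, by omega⟩, A.erase a, mem_avoiding.2
      ⟨fun i hi => hA1 i (Finset.mem_of_mem_erase hi), by omega⟩, Finset.insert_erase ha⟩
  refine (Finset.card_le_card hsub).trans ((Finset.card_biUnion_le_card_mul _ _
    (avoiding S m).card ?_).trans ?_)
  · intro a ha
    obtain ⟨ha1, ha2⟩ := Finset.mem_Icc.1 ha
    exact Finset.card_image_le.trans (avoiding_card_mono hS (by omega) hm)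
  · rw [Nat.card_Icc]
    exact Nat.mul_le_mul_right _ (by omega)

lemma avoiding_card_growth {S : Finset ℕ} {K m h n : ℕ} (hS : ∀ k ∈ S, k ≤ K)
    (hm : 2 * (K + 1) ^ 2 ≤ m) (hh : 1 ≤ h) (hhm : h * h ≤ m) (y : ℕ) (hy : m + y ≤ n) :
    (avoiding S (m + y)).card ≤ n ^ (y / h + 1) * (avoiding S m).card := by
  induction y using Nat.strong_induction_on with
  | _ y ih =>
    rcases le_or_gt h y with hhy | hhy
    · have h1 := ih (y - h) (by omega) (by omega)
      have h2 := avoiding_card_step (m := m + (y - h)) (y := h) hS (by omega) hh le_rfl (by omega)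
      have e1 : m + (y - h) + h = m + y := by omega
      rw [e1] at h2
      have e2 : y / h = (y - h) / h + 1 := by
        rw [Nat.div_eq_sub_div (by omega) hhy]
      rw [e2]
      calc (avoiding S (m + y)).card ≤ (m + y) * (avoiding S (m + (y - h))).card := h2
        _ ≤ n * (n ^ ((y - h) / h + 1) * (avoiding S m).card) := Nat.mul_le_mul hy h1
        _ = _ := by ring
    · rw [Nat.div_eq_of_lt hhy]
      calc (avoiding S (m + y)).card ≤ (m + y) * (avoiding S m).card :=
            avoiding_card_step hS hm hh hhy.le (by omega)
        _ ≤ n ^ (0 + 1) * (avoiding S m).card := by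
            rw [zero_add, pow_one]; exact Nat.mul_le_mul_right _ hy

/-- Splitting a distinct parts partition into its parts inside `S` and outside `S`. -/
lemma card_distincts_filter {n : ℕ} {S : Finset ℕ} (hS1 : ∀ k ∈ S, 1 ≤ k)
    (hSn : ∑ k ∈ S, k ≤ n) (Q : Finset ℕ → Prop) [DecidablePred Q] (p : Nat.Partition n → Prop)
    [DecidablePred p] (hpQ : ∀ lam ∈ Nat.Partition.distincts n,
      (p lam ↔ Q (lam.parts.toFinset ∩ S))) :
    ((Nat.Partition.distincts n).filter p).card =
      ∑ B ∈ S.powerset.filter Q, (avoiding S (n - ∑ k ∈ B, k)).card := by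
  have hnd : ∀ lam ∈ Nat.Partition.distincts n, lam.parts.toFinset.val = lam.parts := by
    intro lam hl
    have : lam.parts.Nodup := by simpa [Nat.Partition.distincts] using hl
    rw [Multiset.toFinset_val, this.dedup]
  have hsumval : ∀ A : Finset ℕ, ∑ i ∈ A, i = A.val.sum := by
    intro A; exact (Finset.sum_val A).symm
  have hle : ∀ B ⊆ S, ∑ k ∈ B, k ≤ n := fun B hB =>
    (Finset.sum_le_sum_of_subset hB).trans hSn
  rw [← Finset.card_sigma]
  refine Finset.card_bij (fun lam _ => ⟨lam.parts.toFinset ∩ S, lam.parts.toFinset \ S⟩) ?_ ?_ ?_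
  · intro lam hl
    obtain ⟨hl1, hl2⟩ := Finset.mem_filter.1 hl
    have hsplit := Finset.sum_inter_add_sum_sdiff lam.parts.toFinset S (fun i => i)
    have hs : ∑ i ∈ lam.parts.toFinset, i = n := by
      rw [hsumval, hnd lam hl1, lam.parts_sum]
    simp only [Finset.mem_sigma, Finset.mem_filter, Finset.mem_powerset]
    refine ⟨⟨Finset.inter_subset_right, (hpQ lam hl1).1 hl2⟩, mem_avoiding.2 ⟨?_, ?_⟩⟩
    · intro i hi
      obtain ⟨hi1, hi2⟩ := Finset.mem_sdiff.1 hi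
      exact ⟨lam.parts_pos (Multiset.mem_toFinset.1 hi1), hi2⟩
    · omega
  · intro lam hl mu hm heq
    obtain ⟨hl1, -⟩ := Finset.mem_filter.1 hl
    obtain ⟨hm1, -⟩ := Finset.mem_filter.1 hm
    simp only [Sigma.mk.injEq, heq_eq_eq] at heq
    have : lam.parts.toFinset = mu.parts.toFinset := by
      rw [← Finset.sdiff_union_inter lam.parts.toFinset S,
        ← Finset.sdiff_union_inter mu.parts.toFinset S, heq.1, heq.2]
    ext1
    rw [← hnd lam hl1, ← hnd mu hm1, this]
  · rintro ⟨B, A⟩ hBA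
    simp only [Finset.mem_sigma, Finset.mem_filter, Finset.mem_powerset] at hBA
    obtain ⟨⟨hB, hQ⟩, hA⟩ := hBA
    obtain ⟨hA1, hA2⟩ := mem_avoiding.1 hA
    have hdisj : Disjoint B A := Finset.disjoint_left.2 fun i hi hi' => (hA1 i hi').2 (hB hi)
    let lam : Nat.Partition n :=
      { parts := (B ∪ A).val
        parts_pos := by
          intro i hi
          rcases Finset.mem_union.1 (Finset.mem_def.2 hi) with h | h
          · exact hS1 i (hB h)
          · exact (hA1 i h).1
        parts_sum := by
          rw [← hsumval, Finset.sum_union hdisj, hA2]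
          have := hle B hB
          omega }
    have hlam : lam.parts.toFinset = B ∪ A := Finset.val_toFinset (B ∪ A)
    have hdis : lam ∈ Nat.Partition.distincts n := by
      simp only [Nat.Partition.distincts, Finset.mem_filter, Finset.mem_univ, true_and]
      exact (B ∪ A).nodup
    have e1 : (B ∪ A) ∩ S = B := by
      ext i
      simp only [Finset.mem_inter, Finset.mem_union]
      exact ⟨fun h => h.1.resolve_right fun h' => (hA1 i h').2 h.2, fun h => ⟨Or.inl h, hB h⟩⟩
    have e2 : (B ∪ A) \ S = A := by
      ext i
      simp only [Finset.mem_sdiff, Finset.mem_union]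
      exact ⟨fun h => h.1.resolve_left fun h' => h.2 (hB h'), fun h => ⟨Or.inr h, (hA1 i h).2⟩⟩
    refine ⟨lam, Finset.mem_filter.2 ⟨hdis, (hpQ lam hdis).2 (by rw [hlam, e1]; exact hQ)⟩, ?_⟩
    rw [hlam, e1, e2]

/-! ### Exponential moments of weighted sign sums -/

/-- The sign attached to `k` by the set `B`: `1` if `k ∈ B`, and `-1` otherwise. -/
def sgn (B : Finset ℕ) (k : ℕ) : ℝ := if k ∈ B then 1 else -1

/-- The moment generating function of a Rademacher sum is at most that of a Gaussian. -/
lemma sum_exp_sgn_le (S : Finset ℕ) (c : ℕ → ℝ) :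
    ∑ B ∈ S.powerset, Real.exp (∑ k ∈ S, sgn B k * c k) ≤
      2 ^ S.card * Real.exp (∑ k ∈ S, c k ^ 2 / 2) := by
  have h1 : ∑ B ∈ S.powerset, Real.exp (∑ k ∈ S, sgn B k * c k) =
      ∏ k ∈ S, (Real.exp (c k) + Real.exp (-c k)) := by
    rw [Finset.prod_add]
    refine Finset.sum_congr rfl fun B hB => ?_
    have hB := Finset.mem_powerset.1 hB
    rw [Real.exp_sum, ← Finset.prod_sdiff hB, mul_comm]
    congr 1
    · refine Finset.prod_congr rfl fun k hk => ?_
      simp [sgn, hk]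
    · refine Finset.prod_congr rfl fun k hk => ?_
      simp [sgn, (Finset.mem_sdiff.1 hk).2]
  rw [h1, Real.exp_sum, ← Finset.prod_const, ← Finset.prod_mul_distrib]
  refine Finset.prod_le_prod (fun k _ => by positivity) fun k _ => ?_
  have := Real.cosh_le_exp_half_sq (c k)
  rw [Real.cosh_eq] at this
  linarith

/-- Large deviation bound for `∑ ± 1 / k` over the subsets `B` of `S` weighted by `a (∑ B)`.
The hypothesis `ha` compares the weight with its value at `s₀`, half of the total sum of `S` rounded
down, and `hmono` makes the total weight at least `a s₀ * 2 ^ |S| / 2`. -/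
lemma weighted_deviation {S : Finset ℕ} {a : ℕ → ℝ} {s₀ : ℕ} {C b t ε : ℝ} (ha0 : ∀ s, 0 ≤ a s)
    (hs₀ : s₀ = (∑ k ∈ S, k) / 2) (hmono : ∀ s ≤ s₀, a s₀ ≤ a s) (hC : 0 ≤ C) (hb : 0 ≤ b)
    (ht : 0 ≤ t)
    (ha : ∀ s ≤ ∑ k ∈ S, k, a s ≤ a s₀ * C * (1 + Real.exp (b * ((s₀ : ℝ) - s)))) :
    ∑ B ∈ S.powerset.filter (fun B => ε < |∑ k ∈ S, sgn B k / k|), a (∑ k ∈ B, k) ≤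
      8 * C * Real.exp (-(t * ε)) *
        Real.exp (∑ k ∈ S, (t ^ 2 * ((k : ℝ) ^ 2)⁻¹ + b ^ 2 * (k : ℝ) ^ 2 / 4)) *
        ∑ B ∈ S.powerset, a (∑ k ∈ B, k) := by
  set G := Real.exp (∑ k ∈ S, (t ^ 2 * ((k : ℝ) ^ 2)⁻¹ + b ^ 2 * (k : ℝ) ^ 2 / 4)) with hG
  have hlow : a s₀ * 2 ^ S.card ≤ 2 * ∑ B ∈ S.powerset, a (∑ k ∈ B, k) := by
    have hcompl : ∑ B ∈ S.powerset, a (∑ k ∈ S \ B, k) = ∑ B ∈ S.powerset, a (∑ k ∈ B, k) := by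
      refine Finset.sum_nbij' (fun B => S \ B) (fun B => S \ B) ?_ ?_ ?_ ?_ ?_
      · intro B _; exact Finset.mem_powerset.2 Finset.sdiff_subset
      · intro B _; exact Finset.mem_powerset.2 Finset.sdiff_subset
      · intro B hB; exact Finset.sdiff_sdiff_eq_self (Finset.mem_powerset.1 hB)
      · intro B hB; exact Finset.sdiff_sdiff_eq_self (Finset.mem_powerset.1 hB)
      · intro B _; rfl
    rw [two_mul]
    nth_rewrite 1 [← hcompl]
    rw [← Finset.sum_add_distrib]
    calc a s₀ * 2 ^ S.card = ∑ B ∈ S.powerset, a s₀ := by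
          rw [Finset.sum_const, Finset.card_powerset, nsmul_eq_mul]; push_cast; ring
      _ ≤ _ := Finset.sum_le_sum fun B hB => ?_
    have hsum := Finset.sum_sdiff (f := fun i : ℕ => i) (Finset.mem_powerset.1 hB)
    rcases le_or_gt (∑ k ∈ B, k) s₀ with h | h
    · linarith [hmono _ h, ha0 (∑ k ∈ S \ B, k)]
    · have hle : ∑ k ∈ S \ B, k ≤ s₀ := by omega
      linarith [hmono _ hle, ha0 (∑ k ∈ B, k)]
  -- The four exponential sums arising below: signs `u = ± t` and slopes `v ∈ {0, b}`.
  have hmgf : ∀ u v : ℝ, u ^ 2 = t ^ 2 → v ^ 2 ≤ b ^ 2 →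
      ∑ B ∈ S.powerset, Real.exp (∑ k ∈ S, sgn B k * (u / k - v * k / 2)) ≤ 2 ^ S.card * G := by
    intro u v hu hv
    refine (sum_exp_sgn_le S _).trans ?_
    refine mul_le_mul_of_nonneg_left (Real.exp_le_exp.2 ?_) (by positivity)
    refine Finset.sum_le_sum fun k _ => ?_
    have e : u / (k : ℝ) = u * (k : ℝ)⁻¹ := div_eq_mul_inv _ _
    have e2 : ((k : ℝ) ^ 2)⁻¹ = (k : ℝ)⁻¹ ^ 2 := by rw [inv_pow]
    rw [e, e2, ← hu]
    have h3 : v ^ 2 * (k : ℝ) ^ 2 ≤ b ^ 2 * (k : ℝ) ^ 2 := by gcongr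
    nlinarith [sq_nonneg (u * (k : ℝ)⁻¹ + v * k / 2)]
  have hpt : ∀ B ∈ S.powerset.filter (fun B => ε < |∑ k ∈ S, sgn B k / k|),
      a (∑ k ∈ B, k) ≤ a s₀ * C * Real.exp (-(t * ε)) *
        (Real.exp (∑ k ∈ S, sgn B k * (t / k - 0 * k / 2)) +
         Real.exp (∑ k ∈ S, sgn B k * (-t / k - 0 * k / 2)) +
         Real.exp (∑ k ∈ S, sgn B k * (t / k - b * k / 2)) +
         Real.exp (∑ k ∈ S, sgn B k * (-t / k - b * k / 2))) := by
    intro B hB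
    obtain ⟨hB1, hB2⟩ := Finset.mem_filter.1 hB
    have hBS := Finset.mem_powerset.1 hB1
    set T := ∑ k ∈ S, sgn B k / k with hT
    set V := ∑ k ∈ S, sgn B k * (k : ℝ) with hV
    have hlin : ∀ u v : ℝ, ∑ k ∈ S, sgn B k * (u / k - v * k / 2) = u * T - v / 2 * V := by
      intro u v
      rw [hT, hV, Finset.mul_sum, Finset.mul_sum, ← Finset.sum_sub_distrib]
      refine Finset.sum_congr rfl fun k _ => by ring
    have hVs : V = 2 * ((∑ k ∈ B, k : ℕ) : ℝ) - ((∑ k ∈ S, k : ℕ) : ℝ) := by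
      rw [hV]
      push_cast
      rw [← Finset.sum_sdiff hBS, ← Finset.sum_sdiff (f := fun k : ℕ => (k : ℝ)) hBS]
      have e1 : ∑ k ∈ S \ B, sgn B k * (k : ℝ) = - ∑ k ∈ S \ B, (k : ℝ) := by
        rw [← Finset.sum_neg_distrib]
        refine Finset.sum_congr rfl fun k hk => ?_
        simp [sgn, (Finset.mem_sdiff.1 hk).2]
      have e2 : ∑ k ∈ B, sgn B k * (k : ℝ) = ∑ k ∈ B, (k : ℝ) := by
        refine Finset.sum_congr rfl fun k hk => ?_
        simp [sgn, hk]
      rw [e1, e2]; ring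
    rw [hlin, hlin, hlin, hlin]
    have hs : ∑ k ∈ B, k ≤ ∑ k ∈ S, k := Finset.sum_le_sum_of_subset hBS
    have h1 := ha _ hs
    have hs₀' : (s₀ : ℝ) ≤ ((∑ k ∈ S, k : ℕ) : ℝ) / 2 := by
      have : 2 * s₀ ≤ ∑ k ∈ S, k := by omega
      have : (2 : ℝ) * s₀ ≤ ((∑ k ∈ S, k : ℕ) : ℝ) := by exact_mod_cast this
      linarith
    have h2 : Real.exp (b * ((s₀ : ℝ) - ((∑ k ∈ B, k : ℕ) : ℝ))) ≤ Real.exp (-(b / 2 * V)) := by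
      apply Real.exp_le_exp.2
      rw [hVs]
      nlinarith
    have h3 : 1 ≤ Real.exp (-(t * ε)) * (Real.exp (t * T) + Real.exp (-t * T)) := by
      rw [mul_add, ← Real.exp_add, ← Real.exp_add]
      rcases lt_abs.1 hB2 with h | h
      · have : 1 ≤ Real.exp (-(t * ε) + t * T) := Real.one_le_exp (by nlinarith)
        linarith [Real.exp_pos (-(t * ε) + -t * T)]
      · have : 1 ≤ Real.exp (-(t * ε) + -t * T) := Real.one_le_exp (by nlinarith)
        linarith [Real.exp_pos (-(t * ε) + t * T)]
    have hAC : 0 ≤ a s₀ * C := mul_nonneg (ha0 _) hC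
    calc a (∑ k ∈ B, k) ≤ a s₀ * C * (1 + Real.exp (-(b / 2 * V))) := h1.trans (by gcongr)
      _ = a s₀ * C * (1 + Real.exp (-(b / 2 * V))) * 1 := by ring
      _ ≤ a s₀ * C * (1 + Real.exp (-(b / 2 * V))) *
          (Real.exp (-(t * ε)) * (Real.exp (t * T) + Real.exp (-t * T))) := by
          gcongr
      _ = _ := by
          simp only [sub_eq_add_neg, Real.exp_add]
          simp only [zero_div, zero_mul, neg_zero, Real.exp_zero]
          ring
  have hnn : ∀ u v : ℝ, ∀ B ∈ S.powerset, B ∉ S.powerset.filter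
      (fun B => ε < |∑ k ∈ S, sgn B k / k|) →
      0 ≤ Real.exp (∑ k ∈ S, sgn B k * (u / k - v * k / 2)) := fun _ _ _ _ _ =>
    (Real.exp_pos _).le
  have hAC : 0 ≤ a s₀ * C := mul_nonneg (ha0 _) hC
  have hfull : ∀ u v : ℝ, u ^ 2 = t ^ 2 → v ^ 2 ≤ b ^ 2 →
      ∑ B ∈ S.powerset.filter (fun B => ε < |∑ k ∈ S, sgn B k / k|),
        Real.exp (∑ k ∈ S, sgn B k * (u / k - v * k / 2)) ≤ 2 ^ S.card * G := fun u v hu hv =>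
    (Finset.sum_le_sum_of_subset_of_nonneg (Finset.filter_subset _ _) (hnn u v)).trans
      (hmgf u v hu hv)
  refine (Finset.sum_le_sum hpt).trans ?_
  rw [← Finset.mul_sum, Finset.sum_add_distrib, Finset.sum_add_distrib, Finset.sum_add_distrib]
  have f1 := hfull t 0 rfl (by nlinarith)
  have f2 := hfull (-t) 0 (by ring) (by nlinarith)
  have f3 := hfull t b rfl le_rfl
  have f4 := hfull (-t) b (by ring) le_rfl
  have hE : 0 < Real.exp (-(t * ε)) := Real.exp_pos _
  have hGp : 0 < G := Real.exp_pos _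
  calc _ ≤ a s₀ * C * Real.exp (-(t * ε)) * (4 * (2 ^ S.card * G)) := by
        gcongr
        linarith
    _ = 4 * C * Real.exp (-(t * ε)) * G * (a s₀ * 2 ^ S.card) := by ring
    _ ≤ 4 * C * Real.exp (-(t * ε)) * G * (2 * ∑ B ∈ S.powerset, a (∑ k ∈ B, k)) := by
        gcongr
    _ = _ := by ring

/-! ### Asymptotic estimates -/

lemma harmonic_log_bounds {k K : ℕ} (hk : 1 ≤ k) (hkK : k ≤ K) :
    ∑ i ∈ Finset.Ioc k K, (1 : ℝ) / i ≤ Real.log ((K : ℝ) / k) ∧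
      Real.log ((K : ℝ) / k) ≤ ∑ i ∈ Finset.Ioc k K, (1 : ℝ) / i + 1 / k - 1 / K := by
  have hk0 : (0 : ℝ) < k := by exact_mod_cast hk
  induction K, hkK using Nat.le_induction with
  | base => simp [hk0.ne']
  | succ K hK ih =>
    have hK0 : (0 : ℝ) < K := by exact_mod_cast hk.trans hK
    have hK1 : (0 : ℝ) < (K : ℝ) + 1 := by linarith
    rw [Finset.sum_Ioc_succ_top hK]
    have hsplit : Real.log (((K + 1 : ℕ) : ℝ) / k) =
        Real.log ((K : ℝ) / k) + Real.log (((K : ℝ) + 1) / K) := by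
      rw [← Real.log_mul (by positivity) (by positivity)]
      congr 1
      push_cast
      field_simp
    have h1 := Real.log_le_sub_one_of_pos (x := ((K : ℝ) + 1) / K) (by positivity)
    have h2 := Real.one_sub_inv_le_log_of_pos (x := ((K : ℝ) + 1) / K) (by positivity)
    have e1 : ((K : ℝ) + 1) / K - 1 = 1 / K := by field_simp; ring
    have e2 : 1 - (((K : ℝ) + 1) / K)⁻¹ = 1 / ((K : ℝ) + 1) := by field_simp; ring
    rw [e1] at h1
    rw [e2] at h2
    rw [hsplit]
    push_cast
    constructor <;> linarith [ih.1, ih.2]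

/-- The explicit bound for the probability of a large deviation. -/
noncomputable def errBound (n : ℕ) : ℝ :=
  8 * n * Real.exp (-((n : ℝ) ^ ((1 : ℝ) / 110) / 2)) * Real.exp (2 + Real.log n ^ 2)

lemma errBound_tendsto : Tendsto errBound atTop (nhds 0) := by
  have hx : Tendsto (fun x : ℝ => 8 * Real.exp 2 *
      Real.exp (x + x ^ 2 - Real.exp (x * (1 / 110)) / 2)) atTop (nhds 0) := by
    have h1 : Tendsto (fun x : ℝ => x + x ^ 2 - Real.exp (x * (1 / 110)) / 2) atTop atBot := by
      have ho : (fun x : ℝ => x + x ^ 2) =o[atTop] fun x => Real.exp (1 / 110 * x) := by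
        refine Asymptotics.IsLittleO.add ?_ ?_
        · simpa using isLittleO_pow_exp_pos_mul_atTop 1 (b := (1 / 110 : ℝ)) (by norm_num)
        · exact isLittleO_pow_exp_pos_mul_atTop 2 (by norm_num)
      have hb := ho.bound (show (0 : ℝ) < 1 / 4 by norm_num)
      have hexp : Tendsto (fun x : ℝ => -(Real.exp (1 / 110 * x) * (1 / 4))) atTop atBot := by
        refine tendsto_neg_atTop_atBot.comp (Tendsto.atTop_mul_const (by norm_num) ?_)
        exact Real.tendsto_exp_atTop.comp (tendsto_id.const_mul_atTop (by norm_num))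
      refine tendsto_atBot_mono' _ ?_ hexp
      filter_upwards [hb] with x hx
      rw [Real.norm_eq_abs, Real.norm_eq_abs, abs_of_pos (Real.exp_pos _)] at hx
      have := le_abs_self (x + x ^ 2)
      rw [mul_comm x (1 / 110)]
      linarith
    have h2 := (Real.tendsto_exp_atBot.comp h1).const_mul (8 * Real.exp 2)
    simpa using h2
  have hlog : Tendsto (fun n : ℕ => Real.log (n : ℝ)) atTop atTop :=
    Real.tendsto_log_atTop.comp tendsto_natCast_atTop_atTop
  refine (hx.comp hlog).congr' ?_
  filter_upwards [eventually_ge_atTop 1] with n hn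
  have hn0 : (0 : ℝ) < n := by exact_mod_cast hn
  unfold errBound
  simp only [Function.comp]
  rw [Real.rpow_def_of_pos hn0, sub_eq_add_neg, Real.exp_add, Real.exp_add, Real.exp_log hn0,
    Real.exp_add]
  ring

lemma Kn_cube_le (n : ℕ) : Kn n ^ 3 ≤ n := by
  have h : (Kn n : ℝ) ≤ (n : ℝ) ^ ((1 : ℝ) / 3) := Nat.floor_le (by positivity)
  have h2 : (Kn n : ℝ) ^ 3 ≤ ((n : ℝ) ^ ((1 : ℝ) / 3)) ^ 3 := by gcongr
  rw [← Real.rpow_natCast ((n : ℝ) ^ ((1 : ℝ) / 3)), ← Real.rpow_mul (by positivity)] at h2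
  norm_num at h2
  exact_mod_cast h2

/-- The number of partitions with `|T| > n ^ (-1/11) / 2` is at most `errBound n` times the number
of all partitions, both counted through their sets `B` of parts in `S`. -/
lemma bad_card_le {n : ℕ} (hn : 1024 ≤ n) {S : Finset ℕ} (hS : S = Finset.Ioc (kn n) (Kn n)) :
    ∑ B ∈ S.powerset.filter (fun B => (n : ℝ) ^ (-(1 / 11) : ℝ) / 2 < |∑ k ∈ S, sgn B k / k|),
        ((avoiding S (n - ∑ k ∈ B, k)).card : ℝ) ≤
      errBound n * ∑ B ∈ S.powerset, ((avoiding S (n - ∑ k ∈ B, k)).card : ℝ) := by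
  have hn0 : (0 : ℝ) < n := by exact_mod_cast (by omega : 0 < n)
  have hn1 : (1 : ℝ) ≤ n := by exact_mod_cast (by omega : 1 ≤ n)
  set K := Kn n with hKdef
  have hSK : ∀ k ∈ S, k ≤ K := by intro k hk; rw [hS] at hk; exact (Finset.mem_Ioc.1 hk).2
  have hK3 : K ^ 3 ≤ n := Kn_cube_le n
  have hKn : 4 * (K + 1) ^ 2 ≤ n := by
    rcases le_or_gt 16 K with h | h
    · nlinarith [Nat.mul_le_mul_right (K ^ 2) h]
    · have : (K + 1) ^ 2 ≤ 16 ^ 2 := Nat.pow_le_pow_left (by omega) 2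
      omega
  have hσ : ∑ k ∈ S, k ≤ (K + 1) * (K + 1 - 1) :=
    sum_le_of_forall_lt fun k hk => Nat.lt_succ_of_le (hSK k hk)
  have hσn : ∑ k ∈ S, k ≤ n / 2 := by
    refine hσ.trans ?_
    rw [Nat.add_sub_cancel, Nat.le_div_iff_mul_le (by norm_num)]
    nlinarith
  set h := Nat.sqrt (n / 2) with hh
  have hhh : h * h ≤ n / 2 := Nat.sqrt_le _
  have hh3 : 3 ≤ h := Nat.le_sqrt.2 (by omega)
  have hh4 : n ≤ 4 * h ^ 2 := by
    have := Nat.lt_succ_sqrt (n / 2)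
    rw [← hh, Nat.succ_eq_add_one] at this
    have h2 : n + 1 ≤ 2 * ((h + 1) * (h + 1)) := by omega
    nlinarith
  have hh0 : (0 : ℝ) < h := by exact_mod_cast (by omega : 0 < h)
  have hsq : √(n : ℝ) ≤ 2 * h := by
    rw [Real.sqrt_le_left (by positivity)]
    have : (n : ℝ) ≤ 4 * (h : ℝ) ^ 2 := by exact_mod_cast hh4
    linarith
  have hsq0 : 0 < √(n : ℝ) := Real.sqrt_pos.2 hn0
  have hlog0 : 0 ≤ Real.log n := Real.log_nonneg hn1
  set s₀ := (∑ k ∈ S, k) / 2 with hs₀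
  set b : ℝ := 2 * Real.log n / √(n : ℝ) with hb
  set t : ℝ := (n : ℝ) ^ ((1 : ℝ) / 10) with ht
  have hb0 : 0 ≤ b := by positivity
  have hbase : ∀ s ≤ ∑ k ∈ S, k, 2 * (K + 1) ^ 2 ≤ n - s := by
    intro s hs
    omega
  have key := weighted_deviation (S := S) (a := fun s => ((avoiding S (n - s)).card : ℝ))
    (s₀ := s₀) (C := n) (b := b) (t := t) (ε := (n : ℝ) ^ (-(1 / 11) : ℝ) / 2)
    (fun s => Nat.cast_nonneg _) hs₀ ?_ hn0.le hb0 (by positivity) ?_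
  · refine key.trans ?_
    refine mul_le_mul_of_nonneg_right ?_ (Finset.sum_nonneg fun _ _ => Nat.cast_nonneg _)
    unfold errBound
    have hte : t * ((n : ℝ) ^ (-(1 / 11) : ℝ) / 2) = (n : ℝ) ^ ((1 : ℝ) / 110) / 2 := by
      rw [ht, ← mul_div_assoc, ← Real.rpow_add hn0]
      norm_num
    rw [hte]
    gcongr
    rw [Finset.sum_add_distrib]
    have hk1 : 1 ≤ kn n := by
      refine Nat.le_floor ?_
      rw [Nat.cast_one]
      exact Real.one_le_rpow hn1 (by norm_num)
    have hkK : kn n ≤ Kn n :=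
      Nat.floor_mono (Real.rpow_le_rpow_of_exponent_le hn1 (by norm_num))
    have hk0 : (0 : ℝ) < kn n := by exact_mod_cast hk1
    have hfl : (n : ℝ) ^ ((1 : ℝ) / 5) ≤ 2 * kn n := by
      have h1 : (n : ℝ) ^ ((1 : ℝ) / 5) < kn n + 1 := Nat.lt_floor_add_one _
      have h2 : (1 : ℝ) ≤ kn n := by exact_mod_cast hk1
      linarith
    have ht2 : t ^ 2 = (n : ℝ) ^ ((1 : ℝ) / 5) := by
      rw [ht, ← Real.rpow_natCast, ← Real.rpow_mul hn0.le]
      norm_num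
    refine add_le_add ?_ ?_
    · rw [← Finset.mul_sum, hS]
      have h1 := sum_Ioc_inv_sq_le_sub (α := ℝ) (by omega : kn n ≠ 0) hkK
      have h2 : (0 : ℝ) ≤ (Kn n : ℝ)⁻¹ := by positivity
      calc t ^ 2 * ∑ i ∈ Finset.Ioc (kn n) (Kn n), ((i : ℝ) ^ 2)⁻¹
          ≤ (2 * kn n) * (kn n : ℝ)⁻¹ := by
            rw [ht2]
            gcongr
            linarith
        _ = 2 := by field_simp
    · have hcard : S.card ≤ K := by rw [hS, Nat.card_Ioc]; omega
      calc ∑ k ∈ S, b ^ 2 * (k : ℝ) ^ 2 / 4 ≤ ∑ k ∈ S, b ^ 2 * (K : ℝ) ^ 2 / 4 := by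
            refine Finset.sum_le_sum fun k hk => ?_
            have : (k : ℝ) ≤ K := by exact_mod_cast hSK k hk
            gcongr
        _ = S.card * (b ^ 2 * (K : ℝ) ^ 2 / 4) := by rw [Finset.sum_const, nsmul_eq_mul]
        _ ≤ K * (b ^ 2 * (K : ℝ) ^ 2 / 4) := by gcongr
        _ = b ^ 2 / 4 * (K : ℝ) ^ 3 := by ring
        _ ≤ b ^ 2 / 4 * n := by gcongr; exact_mod_cast hK3
        _ = Real.log n ^ 2 := by
            rw [hb, div_pow, Real.sq_sqrt hn0.le]
            field_simp
            ring
  · intro s hs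
    have := avoiding_card_mono (S := S) (j := n - s₀) (m := n - s) hSK (by omega)
      (hbase s (by omega))
    exact_mod_cast this
  · intro s hs
    have hA0 : (0 : ℝ) ≤ ((avoiding S (n - s₀)).card : ℝ) := Nat.cast_nonneg _
    rcases le_or_gt s₀ s with hss | hss
    · have h1 : ((avoiding S (n - s)).card : ℝ) ≤ ((avoiding S (n - s₀)).card : ℝ) := by
        exact_mod_cast avoiding_card_mono (S := S) hSK (by omega) (hbase s₀ (by omega))
      calc ((avoiding S (n - s)).card : ℝ) ≤ ((avoiding S (n - s₀)).card : ℝ) * 1 * 1 := by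
            linarith
        _ ≤ _ := by
            gcongr
            linarith [Real.exp_pos (b * ((s₀ : ℝ) - s))]
    · have h1 := avoiding_card_growth (S := S) (m := n - s₀) (h := h) (n := n) hSK
        (hbase s₀ (by omega)) (by omega) (by omega) (s₀ - s) (by omega)
      have e1 : n - s₀ + (s₀ - s) = n - s := by omega
      rw [e1] at h1
      have h2 : ((avoiding S (n - s)).card : ℝ) ≤
          (n : ℝ) ^ ((s₀ - s) / h + 1) * ((avoiding S (n - s₀)).card : ℝ) := by
        exact_mod_cast h1
      have h3 : (n : ℝ) ^ ((s₀ - s) / h) ≤ Real.exp (b * ((s₀ : ℝ) - s)) := by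
        have e2 : (n : ℝ) ^ ((s₀ - s) / h) = Real.exp (((s₀ - s) / h : ℕ) * Real.log n) := by
          rw [Real.exp_nat_mul, Real.exp_log hn0]
        rw [e2]
        apply Real.exp_le_exp.2
        have hd : (((s₀ - s) / h : ℕ) : ℝ) ≤ ((s₀ : ℝ) - s) / h := by
          have := Nat.cast_div_le (α := ℝ) (m := s₀ - s) (n := h)
          rwa [Nat.cast_sub hss.le] at this
        have hpos : (0 : ℝ) ≤ (s₀ : ℝ) - s := by
          have : (s : ℝ) ≤ s₀ := by exact_mod_cast hss.le
          linarith
        have hinv : ((s₀ : ℝ) - s) / h ≤ ((s₀ : ℝ) - s) * (2 / √(n : ℝ)) := by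
          rw [div_eq_mul_one_div]
          gcongr ?_ * ?_
          rw [div_le_div_iff₀ hh0 hsq0]
          linarith
        calc (((s₀ - s) / h : ℕ) : ℝ) * Real.log n
            ≤ (((s₀ : ℝ) - s) * (2 / √(n : ℝ))) * Real.log n := by
              gcongr
              exact hd.trans hinv
          _ = b * ((s₀ : ℝ) - s) := by rw [hb]; ring
      calc ((avoiding S (n - s)).card : ℝ)
          ≤ (n : ℝ) ^ ((s₀ - s) / h + 1) * ((avoiding S (n - s₀)).card : ℝ) := h2
        _ = ((avoiding S (n - s₀)).card : ℝ) * n * (n : ℝ) ^ ((s₀ - s) / h) := by ring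
        _ ≤ ((avoiding S (n - s₀)).card : ℝ) * n * (1 + Real.exp (b * ((s₀ : ℝ) - s))) := by
            gcongr
            linarith

/-- The error made in replacing `∑ 1 / k` by a logarithm is at most `1 / kn n ≤ 2 n ^ (-1/5)`. -/
lemma harmonic_error :
    ∀ᶠ n : ℕ in atTop, |∑ k ∈ Finset.Ioc (kn n) (Kn n), (1 : ℝ) / k
      - Real.log ((Kn n : ℝ) / (kn n))| ≤ (n : ℝ) ^ (-(1 / 11) : ℝ) / 2 := by
  have hlim : Tendsto (fun n : ℕ => (n : ℝ) ^ ((6 : ℝ) / 55)) atTop atTop :=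
    (tendsto_rpow_atTop (by norm_num)).comp tendsto_natCast_atTop_atTop
  filter_upwards [eventually_ge_atTop 1, hlim.eventually_ge_atTop 4] with n hn h4
  have hn0 : (0 : ℝ) < n := by exact_mod_cast hn
  have hn1 : (1 : ℝ) ≤ n := by exact_mod_cast hn
  have hk1 : 1 ≤ kn n := by
    refine Nat.le_floor ?_
    rw [Nat.cast_one]
    exact Real.one_le_rpow hn1 (by norm_num)
  have hkK : kn n ≤ Kn n :=
    Nat.floor_mono (Real.rpow_le_rpow_of_exponent_le hn1 (by norm_num))
  have hk0 : (0 : ℝ) < kn n := by exact_mod_cast hk1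
  have hfl : (n : ℝ) ^ ((1 : ℝ) / 5) ≤ 2 * kn n := by
    have h1 : (n : ℝ) ^ ((1 : ℝ) / 5) < kn n + 1 := Nat.lt_floor_add_one _
    have h2 : (1 : ℝ) ≤ kn n := by exact_mod_cast hk1
    linarith
  obtain ⟨h1, h2⟩ := harmonic_log_bounds hk1 hkK
  have h3 : (0 : ℝ) ≤ 1 / (Kn n : ℝ) := by positivity
  have h5 : 1 / (kn n : ℝ) ≤ (n : ℝ) ^ (-(1 / 11) : ℝ) / 2 := by
    have hp : 0 < (n : ℝ) ^ (-(1 / 11) : ℝ) := Real.rpow_pos_of_pos hn0 _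
    have e : (n : ℝ) ^ ((1 : ℝ) / 5) * (n : ℝ) ^ (-(1 / 11) : ℝ) = (n : ℝ) ^ ((6 : ℝ) / 55) := by
      rw [← Real.rpow_add hn0]; norm_num
    rw [div_le_iff₀ hk0]
    nlinarith
  rw [abs_le]
  constructor <;> linarith

theorem intermediate_parts_concentration :
    Tendsto
      (fun n : ℕ => Pn n (fun lam =>
        |(∑ k ∈ Finset.Ioc (kn n) (Kn n), 2 * (X lam k : ℝ) / k)
          - Real.log ((Kn n : ℝ) / (kn n))| ≤ (n : ℝ) ^ (-(1 / 11) : ℝ)))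
      atTop (nhds 1) := by
  classical
  have hlow : Tendsto (fun n => 1 - errBound n) atTop (nhds 1) := by
    simpa using errBound_tendsto.const_sub 1
  refine tendsto_of_tendsto_of_tendsto_of_le_of_le' hlow tendsto_const_nhds ?_ ?_
  · filter_upwards [harmonic_error, eventually_ge_atTop 1024] with n hharm hn
    set S := Finset.Ioc (kn n) (Kn n) with hS
    have hS1 : ∀ k ∈ S, 1 ≤ k := by
      intro k hk
      have := (Finset.mem_Ioc.1 hk).1
      omega
    have hSn : ∑ k ∈ S, k ≤ n := by
      have h1 : ∑ k ∈ S, k ≤ (Kn n + 1) * (Kn n + 1 - 1) :=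
        sum_le_of_forall_lt fun k hk => Nat.lt_succ_of_le (Finset.mem_Ioc.1 hk).2
      refine h1.trans ?_
      have h3 := Kn_cube_le n
      rw [Nat.add_sub_cancel]
      rcases le_or_gt 2 (Kn n) with h | h
      · nlinarith [Nat.mul_le_mul_right (Kn n ^ 2) h]
      · interval_cases Kn n <;> omega
    set Q : Finset ℕ → Prop :=
      fun B => (n : ℝ) ^ (-(1 / 11) : ℝ) / 2 < |∑ k ∈ S, sgn B k / k| with hQ
    set p : Nat.Partition n → Prop := fun lam => Q (lam.parts.toFinset ∩ S) with hp
    have hbad := card_distincts_filter hS1 hSn Q p (fun _ _ => Iff.rfl)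
    have htot := card_distincts_filter hS1 hSn (fun _ => True) (fun _ : Nat.Partition n => True)
      (fun _ _ => Iff.rfl)
    simp only [Finset.filter_true] at htot
    have hle : (((Nat.Partition.distincts n).filter p).card : ℝ) ≤
        errBound n * ((Nat.Partition.distincts n).card : ℝ) := by
      rw [hbad, htot]
      push_cast
      exact bad_card_le hn hS
    have hpos : 0 < ((Nat.Partition.distincts n).card : ℝ) := by
      have : (Nat.Partition.indiscrete n) ∈ Nat.Partition.distincts n := by
        have hne : n ≠ 0 := by omega
        simp [Nat.Partition.distincts, Nat.Partition.indiscrete_parts hne]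
      exact_mod_cast Finset.card_pos.2 ⟨_, this⟩
    unfold Pn
    rw [le_div_iff₀ hpos]
    set good : Nat.Partition n → Prop := fun lam =>
        |(∑ k ∈ S, 2 * (X lam k : ℝ) / k)
          - Real.log ((Kn n : ℝ) / (kn n))| ≤ (n : ℝ) ^ (-(1 / 11) : ℝ) with hgood
    have hsub : (Nat.Partition.distincts n).filter (fun lam => ¬ p lam) ⊆
        (Nat.Partition.distincts n).filter good := by
      intro lam hl
      obtain ⟨hl1, hl2⟩ := Finset.mem_filter.1 hl
      refine Finset.mem_filter.2 ⟨hl1, ?_⟩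
      have hnd : lam.parts.Nodup := by simpa [Nat.Partition.distincts] using hl1
      simp only [hp, hQ, not_lt] at hl2
      have hsum : ∑ k ∈ S, 2 * (X lam k : ℝ) / k =
          ∑ k ∈ S, sgn (lam.parts.toFinset ∩ S) k / k + ∑ k ∈ S, (1 : ℝ) / k := by
        rw [← Finset.sum_add_distrib]
        refine Finset.sum_congr rfl fun k hk => ?_
        by_cases hmem : k ∈ lam.parts
        · have : X lam k = 1 := Multiset.count_eq_one_of_mem hnd hmem
          simp [sgn, this, hmem, hk]
          ring
        · have : X lam k = 0 := Multiset.count_eq_zero_of_notMem hmem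
          simp [sgn, this, hmem]
          ring
      simp only [hgood]
      rw [hsum, add_sub_assoc]
      refine (abs_add_le _ _).trans ?_
      linarith
    have hcard := Finset.card_le_card hsub
    have hadd := Finset.card_filter_add_card_filter_not (s := Nat.Partition.distincts n) p
    have h1 : ((Nat.Partition.distincts n).card : ℝ) ≤
        (((Nat.Partition.distincts n).filter p).card : ℝ) +
          (((Nat.Partition.distincts n).filter good).card : ℝ) := by
      exact_mod_cast (by omega)
    have h2 : (1 - errBound n) * ((Nat.Partition.distincts n).card : ℝ) ≤
        (((Nat.Partition.distincts n).filter good).card : ℝ) := by linarith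
    convert h2
  · refine Eventually.of_forall fun n => ?_
    unfold Pn
    refine div_le_one_of_le₀ ?_ (Nat.cast_nonneg _)
    exact_mod_cast Finset.card_filter_le _ _
end

section
/- The limit as n → ∞ of P_n({λ ∈ D_n : |Σ_{K_n < k ≤ n} 2·X_k(λ)/k − log(√(3n)/K_n) + γ| ≤ n^{−1/30}}) equals 1. -/
/-!
The proof compares the uniform measure on `D_n` with a Boltzmann measure and absorbs the cost of the
comparison into an exponential concentration bound.

Give a set `A ⊆ {1, …, n}` the weight `exp (-a * ∑ k ∈ A, k)`, with total mass
`Z = ∏ (1 + exp (-a k))`. Under the normalised weights the parts are independent, and `k` is present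
with probability `occ a k = 1 / (1 + exp (a k))`. All sets with sum `n` have the same weight, so the
measure conditioned on sum `n` is uniform on `D_n`.

*Lower bound for `d(n)`.* Take `a = π / (2 √(3x))` (`temp x`) with `x = n - D n^(3/4)`, so that the
sum has mean `x + O(n^(3/4))` (`mean_size`) and variance `O(n^(3/2))` (`sq_sum_le`). For `D` large,
Chebyshev's inequality (`half_le_window`) puts the sum in `[n - 2 D n^(3/4), n]` with probability at
least `1/2`. The number of distinct parts partitions of `m` increases with `m`, since the largest
part can be raised (`card_sumSets_mono`), whence `Z / 2 ≤ n * d(n) * exp (-a (n - 2 D n^(3/4)))`.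

*Concentration.* The statistic is a sum of independent terms `2 X_k / k` with `k > K_n`, all
`O(n^(-1/3))` and with `∑ (2 / k)^2 ≤ 4 / K_n`. The Chernoff bound (`chernoff`) gives its deviations
from its mean by more than `n^(-1/30) / 2` Boltzmann weight at most `2 Z exp (-n^(4/15) / 128)`.
Dividing by the weight `exp (-a n)` of a single partition of `n` and using the lower bound for `d(n)`,
the proportion of bad partitions is at most `4 n exp (4 D n^(1/4) - n^(4/15) / 128)` (`bad_le`,
`one_sub_Pn_le`), which tends to `0` as `4/15 > 1/4`.

*Centering.* Expanding `occ a k` as `∑ j, (exp (-a k (2j+1)) - exp (-a k (2j+2)))` and exchanging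
sums (`hasSum_occ`) turns `∑ 2 occ a k / k` over all `k` into an alternating series of values of
`log (1 - exp (-x))` along multiples of `a`. The beginning of the series is a logarithm of a partial
Wallis product and the rest telescopes by concavity, so the total is `log (π / (2a)) + o(1)`
(`harmonic_occ_bound`). The terms `k ≤ K_n` contribute the harmonic sum `log K_n + γ + o(1)`
(`harmonic_small`), and `π / (2a) = √(3x)`. The same exchange of sums evaluates the mean size, with
`1 - 1/4 + 1/9 - … = π² / 12` in place of Wallis's product (`mean_occ_bound`).
-/

open scoped BigOperators
open Filter

section

open Finset

/-! ### Independent parts: Chernoff and Chebyshev bounds -/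

lemma sum_weight_exp (S : Finset ℕ) (x u : ℕ → ℝ) :
    ∑ A ∈ S.powerset, (∏ k ∈ A, x k) * Real.exp (∑ k ∈ A, u k)
      = ∏ k ∈ S, (1 + x k * Real.exp (u k)) := by
  rw [Finset.prod_one_add]
  refine Finset.sum_congr rfl fun A _ => ?_
  rw [Real.exp_sum, ← Finset.prod_mul_distrib]

lemma one_add_mul_exp_le {x v : ℝ} (hx : 0 < x) (hv : |v| ≤ 1) :
    1 + x * Real.exp v ≤ (1 + x) * Real.exp (x / (1 + x) * v + v ^ 2) := by
  have h1 := (abs_le.1 (Real.abs_exp_sub_one_sub_id_le hv)).2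
  have hp0 : 0 < x / (1 + x) := by positivity
  have hp1 : x / (1 + x) ≤ 1 := by rw [div_le_one (by positivity)]; linarith
  have h2 := Real.add_one_le_exp (x / (1 + x) * v + v ^ 2)
  have h3 : 1 + x * Real.exp v = (1 + x) * (1 + x / (1 + x) * (Real.exp v - 1)) := by
    field_simp; ring
  rw [h3]
  gcongr
  nlinarith [sq_nonneg v]

/-- Moment generating function bound for a sum of independent variables `u k` times a Bernoulli
variable of parameter `x k / (1 + x k)`, written with unnormalised weights `∏ k ∈ A, x k`. -/
lemma sum_weight_exp_le (S : Finset ℕ) (x u : ℕ → ℝ) (hx : ∀ k ∈ S, 0 < x k)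
    (hu : ∀ k ∈ S, |u k| ≤ 1) :
    ∑ A ∈ S.powerset, (∏ k ∈ A, x k) * Real.exp (∑ k ∈ A, u k)
      ≤ (∏ k ∈ S, (1 + x k)) *
        Real.exp (∑ k ∈ S, x k / (1 + x k) * u k + ∑ k ∈ S, u k ^ 2) := by
  rw [sum_weight_exp, ← Finset.sum_add_distrib, Real.exp_sum, ← Finset.prod_mul_distrib]
  refine Finset.prod_le_prod (fun k hk => ?_) fun k hk => one_add_mul_exp_le (hx k hk) (hu k hk)
  have := hx k hk
  positivity

/-- Two-sided Chernoff bound for `∑ k ∈ A, c k` about its mean, where `A` is a random subset of `S`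
of weight `∏ k ∈ A, x k`. -/
lemma chernoff (S : Finset ℕ) (x c : ℕ → ℝ) (t s : ℝ) (ht : 0 ≤ t) (hx : ∀ k ∈ S, 0 < x k)
    (hc : ∀ k ∈ S, |t * c k| ≤ 1) (B : Finset (Finset ℕ)) (hB : B ⊆ S.powerset)
    (hbad : ∀ A ∈ B, s ≤ |∑ k ∈ A, c k - ∑ k ∈ S, x k / (1 + x k) * c k|) :
    ∑ A ∈ B, ∏ k ∈ A, x k ≤
      (∏ k ∈ S, (1 + x k)) * (2 * Real.exp (t ^ 2 * ∑ k ∈ S, c k ^ 2 - t * s)) := by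
  set m := ∑ k ∈ S, x k / (1 + x k) * c k with hm
  have hpos : ∀ A ∈ S.powerset, 0 < ∏ k ∈ A, x k := fun A hA =>
    Finset.prod_pos fun k hk => hx k (Finset.mem_powerset.1 hA hk)
  have key : ∀ ε : ℝ, |ε| = 1 → ∑ A ∈ S.powerset, (∏ k ∈ A, x k) *
      Real.exp (ε * t * (∑ k ∈ A, c k - m)) ≤
      (∏ k ∈ S, (1 + x k)) * Real.exp (t ^ 2 * ∑ k ∈ S, c k ^ 2) := by
    intro ε hε
    have hε2 : ε ^ 2 = 1 := by rw [← sq_abs, hε]; norm_num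
    have h := sum_weight_exp_le S x (fun k => ε * t * c k) hx (fun k hk => by
      rw [mul_assoc, abs_mul, hε, one_mul]; exact hc k hk)
    have h2 := mul_le_mul_of_nonneg_right h (Real.exp_pos (-(ε * t * m))).le
    rw [Finset.sum_mul] at h2
    have e1 : ∑ k ∈ S, x k / (1 + x k) * (ε * t * c k) = ε * t * m := by
      rw [hm, Finset.mul_sum]; exact Finset.sum_congr rfl fun k _ => by ring
    have e2 : ∑ k ∈ S, (ε * t * c k) ^ 2 = t ^ 2 * ∑ k ∈ S, c k ^ 2 := by
      rw [Finset.mul_sum]; exact Finset.sum_congr rfl fun k _ => by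
        rw [mul_pow, mul_pow, hε2, one_mul]
    rw [e1, e2, mul_assoc (∏ k ∈ S, (1 + x k)), ← Real.exp_add] at h2
    refine le_trans (le_of_eq ?_) (h2.trans (le_of_eq ?_))
    · refine Finset.sum_congr rfl fun A _ => ?_
      rw [mul_assoc (∏ k ∈ A, x k), ← Real.exp_add, ← Finset.mul_sum]
      ring_nf
    · ring_nf
  have k1 := key 1 (by simp)
  have k2 := key (-1) (by simp)
  have hsum : ∑ A ∈ B, ∏ k ∈ A, x k ≤ Real.exp (-(t * s)) *
      (∑ A ∈ S.powerset, (∏ k ∈ A, x k) * Real.exp (1 * t * (∑ k ∈ A, c k - m)) +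
       ∑ A ∈ S.powerset, (∏ k ∈ A, x k) * Real.exp (-1 * t * (∑ k ∈ A, c k - m))) := by
    rw [← Finset.sum_add_distrib, Finset.mul_sum]
    refine (Finset.sum_le_sum fun A hA => ?_).trans
      (Finset.sum_le_sum_of_subset_of_nonneg hB fun A hA _ => ?_)
    · have hw := hpos A (hB hA)
      have hb := hbad A hA
      set y := ∑ k ∈ A, c k - m
      rw [← mul_add, mul_left_comm]
      refine le_mul_of_one_le_right hw.le ?_
      have : Real.exp (t * s) ≤ Real.exp (1 * t * y) + Real.exp (-1 * t * y) := by
        have h1 : t * s ≤ t * |y| := by gcongr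
        rcases abs_cases y with ⟨h, _⟩ | ⟨h, _⟩ <;> rw [h] at h1
        · have := Real.exp_le_exp.2 h1
          rw [one_mul]
          linarith [Real.exp_pos (-1 * t * y)]
        · have := Real.exp_le_exp.2 h1
          have e : -1 * t * y = t * -y := by ring
          rw [e]
          linarith [Real.exp_pos (1 * t * y)]
      calc (1 : ℝ) = Real.exp (-(t * s)) * Real.exp (t * s) := by rw [← Real.exp_add]; simp
        _ ≤ _ := by gcongr
    · have hw := hpos A hA
      positivity
  have hexp : Real.exp (t ^ 2 * ∑ k ∈ S, c k ^ 2 - t * s) =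
    Real.exp (-(t * s)) * Real.exp (t ^ 2 * ∑ k ∈ S, c k ^ 2) := by
    rw [← Real.exp_add]; ring_nf
  calc _ ≤ _ := hsum
    _ ≤ Real.exp (-(t * s)) * ((∏ k ∈ S, (1 + x k)) * Real.exp (t ^ 2 * ∑ k ∈ S, c k ^ 2) +
      (∏ k ∈ S, (1 + x k)) * Real.exp (t ^ 2 * ∑ k ∈ S, c k ^ 2)) := by gcongr
    _ = _ := by rw [hexp]; ring

/-- The centred first and second moments of `∑ k ∈ A, c k`, where `A` is a random subset of `S` of
weight `∏ k ∈ A, x k`. -/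
lemma moments (S : Finset ℕ) (x c : ℕ → ℝ) (hx : ∀ k, 0 < x k) :
    ∑ A ∈ S.powerset, (∏ k ∈ A, x k) * (∑ k ∈ A, c k - ∑ k ∈ S, x k / (1 + x k) * c k) = 0 ∧
    ∑ A ∈ S.powerset, (∏ k ∈ A, x k) * (∑ k ∈ A, c k - ∑ k ∈ S, x k / (1 + x k) * c k) ^ 2
      = (∏ k ∈ S, (1 + x k)) * ∑ k ∈ S, x k / (1 + x k) ^ 2 * c k ^ 2 := by
  induction S using Finset.induction_on with
  | empty => simp
  | insert b S hb ih =>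
    obtain ⟨ih1, ih2⟩ := ih
    have h0 : ∑ A ∈ S.powerset, ∏ k ∈ A, x k = ∏ k ∈ S, (1 + x k) :=
      (Finset.prod_one_add _).symm
    rw [Finset.sum_powerset_insert hb, Finset.sum_powerset_insert hb, Finset.prod_insert hb,
      Finset.sum_insert hb, Finset.sum_insert hb]
    set m := ∑ k ∈ S, x k / (1 + x k) * c k
    have hxb := hx b
    have hne : (1 + x b) ≠ 0 := by positivity
    have hi : ∀ A ∈ S.powerset, b ∉ A := fun A hA h => hb (Finset.mem_powerset.1 hA h)
    constructor
    · have e1 : ∀ A ∈ S.powerset, (∏ k ∈ insert b A, x k) *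
          (∑ k ∈ insert b A, c k - (x b / (1 + x b) * c b + m)) =
          x b * ((∏ k ∈ A, x k) * (∑ k ∈ A, c k - m))
            + x b * c b / (1 + x b) * ∏ k ∈ A, x k := by
        intro A hA
        rw [Finset.prod_insert (hi A hA), Finset.sum_insert (hi A hA)]
        field_simp; ring
      have e2 : ∀ A ∈ S.powerset, (∏ k ∈ A, x k) *
          (∑ k ∈ A, c k - (x b / (1 + x b) * c b + m)) =
          ((∏ k ∈ A, x k) * (∑ k ∈ A, c k - m))
            - x b * c b / (1 + x b) * ∏ k ∈ A, x k := by
        intro A hA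
        field_simp; ring
      rw [Finset.sum_congr rfl e1, Finset.sum_congr rfl e2, Finset.sum_add_distrib,
        Finset.sum_sub_distrib, ← Finset.mul_sum, ← Finset.mul_sum, ih1, h0]
      ring
    · have e1 : ∀ A ∈ S.powerset, (∏ k ∈ insert b A, x k) *
          (∑ k ∈ insert b A, c k - (x b / (1 + x b) * c b + m)) ^ 2 =
          x b * ((∏ k ∈ A, x k) * (∑ k ∈ A, c k - m) ^ 2)
            + 2 * x b * (c b / (1 + x b)) * ((∏ k ∈ A, x k) * (∑ k ∈ A, c k - m))
            + x b * (c b / (1 + x b)) ^ 2 * ∏ k ∈ A, x k := by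
        intro A hA
        rw [Finset.prod_insert (hi A hA), Finset.sum_insert (hi A hA)]
        field_simp; ring
      have e2 : ∀ A ∈ S.powerset, (∏ k ∈ A, x k) *
          (∑ k ∈ A, c k - (x b / (1 + x b) * c b + m)) ^ 2 =
          ((∏ k ∈ A, x k) * (∑ k ∈ A, c k - m) ^ 2)
            - 2 * (x b * c b / (1 + x b)) * ((∏ k ∈ A, x k) * (∑ k ∈ A, c k - m))
            + (x b * c b / (1 + x b)) ^ 2 * ∏ k ∈ A, x k := by
        intro A hA
        field_simp; ring
      rw [Finset.sum_congr rfl e1, Finset.sum_congr rfl e2]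
      simp only [Finset.sum_add_distrib, Finset.sum_sub_distrib, ← Finset.mul_sum]
      rw [ih1, ih2, h0]
      field_simp; ring

/-- Chebyshev's inequality: the sets whose sum is within `R` of the mean carry at least half of the
total weight, as soon as `R ^ 2` is at least twice (a bound for) the variance. -/
lemma half_le_window (S : Finset ℕ) (x c : ℕ → ℝ) (hx : ∀ k, 0 < x k) (R : ℝ) (hR : 0 < R)
    (hV : 2 * ∑ k ∈ S, x k * c k ^ 2 ≤ R ^ 2) :
    (∏ k ∈ S, (1 + x k)) / 2 ≤ ∑ A ∈ S.powerset with
      |∑ k ∈ A, c k - ∑ k ∈ S, x k / (1 + x k) * c k| ≤ R, ∏ k ∈ A, x k := by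
  have h2 := (moments S x c hx).2
  have h0 : ∑ A ∈ S.powerset, ∏ k ∈ A, x k = ∏ k ∈ S, (1 + x k) :=
    (Finset.prod_one_add _).symm
  set m := ∑ k ∈ S, x k / (1 + x k) * c k
  have hZ : 0 < ∏ k ∈ S, (1 + x k) := Finset.prod_pos fun k _ => by have := hx k; positivity
  have hw : ∀ A : Finset ℕ, 0 < ∏ k ∈ A, x k := fun A => Finset.prod_pos fun k _ => hx k
  rw [← Finset.sum_filter_add_sum_filter_not S.powerset
    (fun A => |∑ k ∈ A, c k - m| ≤ R)] at h0
  have hvar : ∑ k ∈ S, x k / (1 + x k) ^ 2 * c k ^ 2 ≤ ∑ k ∈ S, x k * c k ^ 2 := by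
    refine Finset.sum_le_sum fun k _ => ?_
    have := hx k
    gcongr
    exact div_le_self this.le (by nlinarith)
  have hbad : R ^ 2 * ∑ A ∈ S.powerset with ¬ |∑ k ∈ A, c k - m| ≤ R, ∏ k ∈ A, x k ≤
      (∏ k ∈ S, (1 + x k)) * ∑ k ∈ S, x k / (1 + x k) ^ 2 * c k ^ 2 := by
    rw [← h2, Finset.mul_sum]
    refine (Finset.sum_le_sum fun A hA => ?_).trans
      (Finset.sum_le_sum_of_subset_of_nonneg (Finset.filter_subset _ _) fun A hA _ => ?_)
    · rw [mul_comm]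
      have := (Finset.mem_filter.1 hA).2
      have h3 : R ^ 2 ≤ (∑ k ∈ A, c k - m) ^ 2 := by
        rw [← sq_abs (∑ k ∈ A, c k - m)]
        push Not at this
        gcongr
      exact mul_le_mul_of_nonneg_left h3 (hw A).le
    · have := hw A
      positivity
  have h5 : (∏ k ∈ S, (1 + x k)) * ∑ k ∈ S, x k / (1 + x k) ^ 2 * c k ^ 2 ≤
      (∏ k ∈ S, (1 + x k)) * (R ^ 2 / 2) := by gcongr; linarith
  have h6 : ∑ A ∈ S.powerset with ¬ |∑ k ∈ A, c k - m| ≤ R, ∏ k ∈ A, x k ≤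
      (∏ k ∈ S, (1 + x k)) / 2 := by
    have hR2 : 0 < R ^ 2 := by positivity
    refine le_of_mul_le_mul_left ((hbad.trans h5).trans (le_of_eq (by ring))) hR2
  linarith

/-! ### Sums of occupation probabilities as alternating series -/

/-- The probability `1 / (1 + exp (a k))` that the part `k` is present when the independent parts
have weights `exp (-a k)`. -/
noncomputable def occ (a : ℝ) (k : ℕ) : ℝ := Real.exp (-(a * k)) / (1 + Real.exp (-(a * k)))

lemma occ_nonneg (a : ℝ) (k : ℕ) : 0 ≤ occ a k := by unfold occ; positivity

lemma occ_le (a : ℝ) (k : ℕ) : occ a k ≤ Real.exp (-(a * k)) :=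
  div_le_self (Real.exp_pos _).le (by linarith [Real.exp_pos (-(a * k))])

lemma exp_neg_lt_one {y : ℝ} (hy : 0 < y) : Real.exp (-y) < 1 := by
  rw [Real.exp_lt_one_iff]; linarith

lemma HasSum.of_eq {f g : ℕ → ℝ} {a b : ℝ} (h : HasSum f a) (hf : ∀ j, g j = f j) (hab : b = a) :
    HasSum g b := by
  rw [hab, funext hf]; exact h

lemma hasSum_alternating {r : ℝ} (h0 : 0 < r) (h1 : r < 1) :
    HasSum (fun j : ℕ => r ^ (2 * j + 1) - r ^ (2 * j + 2)) (r / (1 + r)) := by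
  have h := (hasSum_geometric_of_lt_one (sq_nonneg r) (by nlinarith : r ^ 2 < 1)).mul_left (r - r ^ 2)
  refine h.of_eq (fun j => ?_) ?_
  · rw [← pow_mul]; ring
  · have : 1 - r ^ 2 ≠ 0 := by nlinarith
    field_simp; ring

/-- Exchange of summations: if `F` is the generating function of `g`, where `g k` is the coefficient
attached to the part `k + 1`, then `∑ g k * occ a (k + 1)` is an alternating series of values of `F`.
Pairing consecutive terms keeps all terms of the double series nonnegative. -/
lemma hasSum_occ (g : ℕ → ℝ) (hg : ∀ k, 0 ≤ g k) (F : ℝ → ℝ)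
    (hF : ∀ s, 0 < s → s < 1 → HasSum (fun k => g k * s ^ (k + 1)) (F s)) (a : ℝ) (ha : 0 < a) :
    Summable (fun k => g k * occ a (k + 1)) ∧
    HasSum (fun j : ℕ => F (Real.exp (-(a * (2 * j + 1)))) - F (Real.exp (-(a * (2 * j + 2)))))
      (∑' k, g k * occ a (k + 1)) := by
  set r : ℕ → ℝ := fun k => Real.exp (-(a * (k + 1 : ℕ))) with hr
  have hr0 : ∀ k, 0 < r k := fun k => Real.exp_pos _
  have hr1 : ∀ k, r k < 1 := fun k => exp_neg_lt_one (by positivity)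
  set f : ℕ × ℕ → ℝ := fun z => g z.1 * (r z.1 ^ (2 * z.2 + 1) - r z.1 ^ (2 * z.2 + 2)) with hf
  have hf0 : 0 ≤ f := fun z => mul_nonneg (hg _) (sub_nonneg.2
    (pow_le_pow_of_le_one (hr0 _).le (hr1 _).le (by omega)))
  have hrow : ∀ k, HasSum (fun j => f (k, j)) (g k * occ a (k + 1)) := fun k =>
    (hasSum_alternating (hr0 k) (hr1 k)).mul_left (g k)
  have hsum : Summable (fun k => g k * occ a (k + 1)) := by
    refine Summable.of_nonneg_of_le (fun k => mul_nonneg (hg k) (occ_nonneg _ _)) (fun k => ?_)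
      (hF (Real.exp (-a)) (Real.exp_pos _) (exp_neg_lt_one ha)).summable
    refine mul_le_mul_of_nonneg_left ((occ_le _ _).trans (le_of_eq ?_)) (hg k)
    rw [← Real.exp_nat_mul]; ring_nf
  refine ⟨hsum, ?_⟩
  have hfs : Summable f := by
    rw [summable_prod_of_nonneg hf0]
    refine ⟨fun k => (hrow k).summable, ?_⟩
    simpa only [(hrow _).tsum_eq] using hsum
  have hS : HasSum f (∑' k, g k * occ a (k + 1)) := by
    have := hfs.hasSum.prod_fiberwise hrow
    rw [this.tsum_eq]; exact hfs.hasSum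
  have hswap : HasSum (fun z : ℕ × ℕ => f z.swap) (∑' k, g k * occ a (k + 1)) :=
    (Equiv.prodComm ℕ ℕ).hasSum_iff.2 hS
  refine hswap.prod_fiberwise fun j => ?_
  have h1 := hF (Real.exp (-(a * (2 * j + 1)))) (Real.exp_pos _) (exp_neg_lt_one (by positivity))
  have h2 := hF (Real.exp (-(a * (2 * j + 2)))) (Real.exp_pos _) (exp_neg_lt_one (by positivity))
  refine (h1.sub h2).of_eq (fun k => ?_) rfl
  simp only [hf, hr, Prod.swap, ← Real.exp_nat_mul, mul_sub]
  push_cast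
  ring_nf

/-! ### The harmonic sum of the occupation probabilities -/

/-- The function `log (1 - exp (-x))`, meant for `x > 0`. -/
noncomputable def hlog (x : ℝ) : ℝ := Real.log (1 - Real.exp (-x))

lemma one_sub_exp_pos {x : ℝ} (hx : 0 < x) : 0 < 1 - Real.exp (-x) := by
  linarith [exp_neg_lt_one hx]

/-- Midpoint concavity of `hlog`, in increment form. -/
lemma hlog_concave {x a : ℝ} (hxa : 0 < x - a) (hx : 0 < x) (ha : 0 < a) :
    hlog (x + a) - hlog x ≤ hlog x - hlog (x - a) := by
  have h1 := one_sub_exp_pos hx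
  have h2 := one_sub_exp_pos hxa
  have h3 := one_sub_exp_pos (by linarith : 0 < x + a)
  have : hlog (x + a) + hlog (x - a) ≤ hlog x + hlog x := by
    unfold hlog
    rw [← Real.log_mul h3.ne' h2.ne', ← Real.log_mul h1.ne' h1.ne']
    refine Real.log_le_log (by positivity) ?_
    have e1 : Real.exp (-(x + a)) = Real.exp (-x) * Real.exp (-a) := by
      rw [← Real.exp_add]; ring_nf
    have e2 : Real.exp (-(x - a)) = Real.exp (-x) * Real.exp a := by
      rw [← Real.exp_add]; ring_nf
    have e3 : Real.exp (-a) * Real.exp a = 1 := by rw [← Real.exp_add]; simp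
    have e4 : 2 ≤ Real.exp a + Real.exp (-a) := by
      have := Real.one_le_cosh a
      rw [Real.cosh_eq] at this; linarith
    rw [e1, e2]
    have : 0 < Real.exp (-x) := Real.exp_pos _
    nlinarith
  linarith

lemma exp_secant {x y : ℝ} (hx : x ≠ 0) (hy : y ≠ 0) (h : x ≤ y) :
    (Real.exp x - 1) / x ≤ (Real.exp y - 1) / y := by
  have := convexOn_exp.secant_mono (Set.mem_univ 0) (Set.mem_univ x) (Set.mem_univ y) hx hy h
  simpa using this

/-- `(1 - exp (-x)) / x` is decreasing. -/
lemma hlog_sub_le {x y : ℝ} (hy : 0 < y) (h : y ≤ x) : hlog x - hlog y ≤ Real.log x - Real.log y := by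
  have hx : 0 < x := by linarith
  have h1 := one_sub_exp_pos hx
  have h2 := one_sub_exp_pos hy
  have h3 := exp_secant (x := -x) (y := -y) (by linarith) (by linarith) (by linarith)
  have h4 : (1 - Real.exp (-x)) / x ≤ (1 - Real.exp (-y)) / y := by
    convert h3 using 1 <;> rw [div_neg, ← neg_div, neg_sub]
  have := Real.log_le_log (by positivity) h4
  rw [Real.log_div h1.ne' hx.ne', Real.log_div h2.ne' hy.ne'] at this
  unfold hlog; linarith

lemma log_exp_sub_one {x : ℝ} (hx : 0 < x) : Real.log (Real.exp x - 1) = x + hlog x := by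
  have h1 := one_sub_exp_pos hx
  have : Real.exp x - 1 = Real.exp x * (1 - Real.exp (-x)) := by
    rw [mul_sub, ← Real.exp_add]; simp
  rw [this, Real.log_mul (Real.exp_pos x).ne' h1.ne', Real.log_exp, hlog]

/-- `(exp x - 1) / x` is increasing. -/
lemma le_hlog_sub {x y : ℝ} (hy : 0 < y) (h : y ≤ x) :
    Real.log x - Real.log y - (x - y) ≤ hlog x - hlog y := by
  have hx : 0 < x := by linarith
  have h1 : 0 < Real.exp x - 1 := by linarith [Real.add_one_lt_exp hx.ne']
  have h2 : 0 < Real.exp y - 1 := by linarith [Real.add_one_lt_exp hy.ne']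
  have h3 := exp_secant hy.ne' hx.ne' h
  have := Real.log_le_log (by positivity) h3
  rw [Real.log_div h1.ne' hx.ne', Real.log_div h2.ne' hy.ne', log_exp_sub_one hx,
    log_exp_sub_one hy] at this
  linarith

lemma hlog_le {x : ℝ} (hx : 0 < x) : hlog x ≤ Real.log x := by
  refine Real.log_le_log (one_sub_exp_pos hx) ?_
  linarith [Real.add_one_le_exp (-x)]

lemma le_hlog {x : ℝ} (hx : 0 < x) : Real.log x - x ≤ hlog x := by
  have := Real.log_le_log hx (by linarith [Real.add_one_le_exp x] : x ≤ Real.exp x - 1)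
  rw [log_exp_sub_one hx] at this
  linarith

lemma tendsto_hlog : Tendsto hlog atTop (nhds 0) := by
  have h : Tendsto (fun x : ℝ => 1 - Real.exp (-x)) atTop (nhds 1) := by
    simpa using (tendsto_const_nhds (x := (1:ℝ))).sub
      (Real.tendsto_exp_neg_atTop_nhds_zero)
  have := (Real.continuousAt_log one_ne_zero).tendsto.comp h
  rw [Real.log_one] at this
  exact this

lemma log_wallis (J : ℕ) :
    2 * ∑ j ∈ range J, (Real.log (2 * j + 2) - Real.log (2 * j + 1)) =
      Real.log (Real.Wallis.W J) + Real.log (2 * J + 1) := by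
  induction J with
  | zero => simp [Real.Wallis.W]
  | succ J ih =>
    rw [Finset.sum_range_succ, mul_add, ih, Real.Wallis.W_succ,
      Real.log_mul (Real.Wallis.W_pos J).ne' (by positivity),
      Real.log_mul (by positivity) (by positivity), Real.log_div (by positivity) (by positivity),
      Real.log_div (by positivity) (by positivity)]
    push_cast
    ring_nf

lemma log_succ_sub_log_le {y : ℝ} (hy : 0 < y) : Real.log (y + 1) - Real.log y ≤ 1 / y := by
  rw [← Real.log_div (by positivity) hy.ne']
  refine (Real.log_le_sub_one_of_pos (by positivity)).trans (le_of_eq ?_)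
  field_simp; ring

/-- The alternating series of `hlog` along multiples of `a` is close to `log (π / (2 * a))`. The first
`J` terms are compared with the logarithm of the partial Wallis product; the later increments are
compared, by concavity, with the increments just before and just after them, which telescopes. -/
lemma alt_hlog_bound {a T : ℝ} (ha : 0 < a)
    (hT : HasSum (fun j : ℕ => 2 * (hlog (a * (2 * j + 2)) - hlog (a * (2 * j + 1)))) T)
    (J : ℕ) (hJ : 1 ≤ J) :
    |T - Real.log (Real.pi / (2 * a))| ≤ 1 / (2 * J) + 2 * a * J := by
  set D : ℕ → ℝ := fun j => 2 * (hlog (a * (2 * j + 2)) - hlog (a * (2 * j + 1))) with hD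
  have hJ' : (1 : ℝ) ≤ J := by exact_mod_cast hJ
  have hlim := hT.tendsto_sum_nat
  -- twice an increment of `hlog` is at most its sum with the preceding increment, and at least
  -- its sum with the following one
  have hup : ∀ M, J ≤ M → ∑ j ∈ range M, D j ≤
      ∑ j ∈ range J, D j + (hlog (a * (2 * M)) - hlog (a * (2 * J))) := by
    intro M hM
    induction M, hM using Nat.le_induction with
    | base => simp
    | succ M hM ih =>
      have hM' : (1 : ℝ) ≤ M := hJ'.trans (by exact_mod_cast hM)
      rw [Finset.sum_range_succ]
      have := hlog_concave (x := a * (2 * M + 1)) (a := a) (by nlinarith) (by positivity) ha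
      have e1 : a * (2 * M + 1) + a = a * (2 * M + 2) := by ring
      have e2 : a * (2 * M + 1) - a = a * (2 * M) := by ring
      have e3 : a * (2 * ((M + 1 : ℕ) : ℝ)) = a * (2 * M + 2) := by push_cast; ring
      rw [e1, e2] at this
      rw [e3]
      simp only [hD] at ih ⊢
      linarith
  have hlo : ∀ M, J ≤ M → ∑ j ∈ range J, D j + (hlog (a * (2 * M + 1)) - hlog (a * (2 * J + 1)))
      ≤ ∑ j ∈ range M, D j := by
    intro M hM
    induction M, hM using Nat.le_induction with
    | base => simp
    | succ M hM ih =>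
      rw [Finset.sum_range_succ]
      have := hlog_concave (x := a * (2 * M + 2)) (a := a) (by nlinarith) (by positivity) ha
      have e1 : a * (2 * M + 2) + a = a * (2 * M + 3) := by ring
      have e2 : a * (2 * M + 2) - a = a * (2 * M + 1) := by ring
      have e3 : a * (2 * ((M + 1 : ℕ) : ℝ) + 1) = a * (2 * M + 3) := by push_cast; ring
      rw [e1, e2] at this
      rw [e3]
      simp only [hD] at ih ⊢
      linarith
  have t1 : Tendsto (fun M : ℕ => a * (2 * (M : ℝ))) atTop atTop :=
    (tendsto_natCast_atTop_atTop.const_mul_atTop (by norm_num : (0:ℝ) < 2)).const_mul_atTop ha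
  have t2 : Tendsto (fun M : ℕ => a * (2 * (M : ℝ) + 1)) atTop atTop :=
    (tendsto_atTop_add_const_right _ 1
      (tendsto_natCast_atTop_atTop.const_mul_atTop (by norm_num : (0:ℝ) < 2))).const_mul_atTop ha
  have hTup : T ≤ ∑ j ∈ range J, D j - hlog (a * (2 * J)) := by
    have l : Tendsto (fun M : ℕ => ∑ j ∈ range J, D j + (hlog (a * (2 * M)) - hlog (a * (2 * J))))
      atTop (nhds (∑ j ∈ range J, D j + (0 - hlog (a * (2 * J))))) :=
      ((tendsto_hlog.comp t1).sub_const _).const_add _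
    have := le_of_tendsto_of_tendsto hlim l ((eventually_ge_atTop J).mono hup)
    linarith
  have hTlo : ∑ j ∈ range J, D j - hlog (a * (2 * J + 1)) ≤ T := by
    have l : Tendsto (fun M : ℕ => ∑ j ∈ range J, D j +
      (hlog (a * (2 * M + 1)) - hlog (a * (2 * J + 1))))
      atTop (nhds (∑ j ∈ range J, D j + (0 - hlog (a * (2 * J + 1))))) :=
      ((tendsto_hlog.comp t2).sub_const _).const_add _
    have := le_of_tendsto_of_tendsto l hlim ((eventually_ge_atTop J).mono hlo)
    linarith
  have hPup : ∑ j ∈ range J, D j ≤ Real.log (Real.Wallis.W J) + Real.log (2 * J + 1) := by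
    rw [← log_wallis, Finset.mul_sum]
    refine Finset.sum_le_sum fun j _ => ?_
    have := hlog_sub_le (x := a * (2 * j + 2)) (y := a * (2 * j + 1)) (by positivity) (by nlinarith)
    rw [Real.log_mul ha.ne' (by positivity), Real.log_mul ha.ne' (by positivity)] at this
    simp only [hD]; linarith
  have hPlo : Real.log (Real.Wallis.W J) + Real.log (2 * J + 1) - 2 * a * J ≤ ∑ j ∈ range J, D j := by
    have e : 2 * a * J = ∑ j ∈ range J, 2 * a := by simp; ring
    rw [← log_wallis, Finset.mul_sum, e, ← Finset.sum_sub_distrib]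
    refine Finset.sum_le_sum fun j _ => ?_
    have := le_hlog_sub (x := a * (2 * j + 2)) (y := a * (2 * j + 1)) (by positivity) (by nlinarith)
    rw [Real.log_mul ha.ne' (by positivity), Real.log_mul ha.ne' (by positivity)] at this
    simp only [hD]; linarith
  have hpi := Real.pi_pos
  have hWup := Real.log_le_log (Real.Wallis.W_pos J) (Real.Wallis.W_le J)
  have hWlo := Real.log_le_log (by positivity) (Real.Wallis.le_W J)
  rw [Real.log_mul (by positivity) (by positivity), Real.log_div (by positivity) (by positivity)]
    at hWlo
  have q1 := le_hlog (x := a * (2 * J)) (by positivity)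
  have q2 := hlog_le (x := a * (2 * J + 1)) (by positivity)
  rw [Real.log_mul ha.ne' (by positivity)] at q1 q2
  have q3 := log_succ_sub_log_le (y := 2 * (J : ℝ)) (by positivity)
  have q4 := log_succ_sub_log_le (y := 2 * (J : ℝ) + 1) (by positivity)
  have q5 : 1 / (2 * (J : ℝ) + 1) ≤ 1 / (2 * J) := by gcongr; linarith
  have e : (2 * (J : ℝ) + 1 + 1) = 2 * J + 2 := by ring
  rw [e] at q4
  have e2 : Real.log (Real.pi / (2 * a)) = Real.log (Real.pi / 2) - Real.log a := by
    rw [← div_div, Real.log_div (by positivity) ha.ne']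
  rw [e2, abs_le]
  constructor <;> linarith

lemma harmonic_occ_bound {a : ℝ} (ha : 0 < a) :
    Summable (fun k : ℕ => 2 / ((k : ℝ) + 1) * occ a (k + 1)) ∧
    ∀ J : ℕ, 1 ≤ J → |∑' k : ℕ, 2 / ((k : ℝ) + 1) * occ a (k + 1) - Real.log (Real.pi / (2 * a))|
      ≤ 1 / (2 * J) + 2 * a * J := by
  obtain ⟨h1, h2⟩ := hasSum_occ (fun k : ℕ => 2 / ((k : ℝ) + 1)) (fun k => by positivity)
    (fun s => 2 * (-Real.log (1 - s))) (fun s h0 h1 => by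
      have := (Real.hasSum_pow_div_log_of_abs_lt_one (x := s) (by rwa [abs_of_pos h0])).mul_left 2
      exact this.of_eq (fun k => by ring) rfl) a ha
  refine ⟨h1, fun J hJ => alt_hlog_bound ha ?_ J hJ⟩
  exact h2.of_eq (fun j => by simp only [hlog]; ring) rfl

/-! ### The mean and the variance of the size -/

lemma hasSum_eta_two : HasSum (fun j : ℕ => 1 / (2 * (j : ℝ) + 1) ^ 2 - 1 / (2 * (j : ℝ) + 2) ^ 2)
    (Real.pi ^ 2 / 12) := by
  set f : ℕ → ℝ := fun n => 1 / (n : ℝ) ^ 2 with hf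
  have h : HasSum f (Real.pi ^ 2 / 6) := hasSum_zeta_two
  have he : HasSum (fun j : ℕ => f (2 * j)) (Real.pi ^ 2 / 24) := by
    refine (h.mul_left (1 / 4)).of_eq (fun j => ?_) (by ring)
    simp only [hf]
    push_cast; rw [mul_pow, one_div_mul_one_div]; norm_num
  have hinj : Function.Injective (fun j : ℕ => 2 * j + 1) := fun _ _ h => by simpa using h
  have ho : Summable (fun j : ℕ => f (2 * j + 1)) := h.summable.comp_injective hinj
  have hv := (he.even_add_odd ho.hasSum).unique h
  have hshift : HasSum (fun j : ℕ => f (2 * (j + 1))) (Real.pi ^ 2 / 24) := by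
    have := (hasSum_nat_add_iff' (f := fun j : ℕ => f (2 * j)) 1).2 he
    exact this.of_eq (fun j => rfl) (by simp [hf])
  refine (ho.hasSum.sub hshift).of_eq (fun j => ?_) (by linarith)
  simp only [hf]
  push_cast; ring_nf

/-- The value at `s = exp (-x)` of the generating function `∑ k * s ^ k = s / (1 - s) ^ 2`. -/
noncomputable def psi (x : ℝ) : ℝ := Real.exp (-x) / (1 - Real.exp (-x)) ^ 2

/-- Any exponent in `(-2, -1)` would do: it has to be below `-1` for the bounds to be summable along
multiples of `a`, and above `-2` for them to be of lower order than `a ^ (-2)`. -/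
lemma psi_bound {x : ℝ} (hx : 0 < x) : |psi x - 1 / x ^ 2| ≤ x ^ (-(3 / 2) : ℝ) := by
  have h1 := one_sub_exp_pos hx
  have hup : psi x ≤ 1 / x ^ 2 := by
    have hc := Real.self_le_sinh_iff.2 (by positivity : 0 ≤ x / 2)
    have h2 : 1 - Real.exp (-x) = 2 * Real.sinh (x / 2) * Real.exp (-(x / 2)) := by
      rw [Real.sinh_eq, mul_div_cancel₀ _ (two_ne_zero), sub_mul, ← Real.exp_add, ← Real.exp_add]
      ring_nf; rw [Real.exp_zero]; ring
    have h3 : Real.exp (-x) = Real.exp (-(x / 2)) ^ 2 := by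
      rw [← Real.exp_nat_mul]; ring_nf
    have h4 : psi x = 1 / (2 * Real.sinh (x / 2)) ^ 2 := by
      have : 0 < Real.sinh (x / 2) := by linarith
      rw [psi, h2, h3]
      field_simp
    rw [h4]
    gcongr
    linarith
  have hlo : 1 / x ^ 2 - 1 / x ≤ psi x := by
    have : (1 - x) / x ^ 2 ≤ Real.exp (-x) / x ^ 2 := by
      gcongr; linarith [Real.add_one_le_exp (-x)]
    have h2 : Real.exp (-x) / x ^ 2 ≤ psi x := by
      unfold psi
      gcongr; linarith [Real.add_one_le_exp (-x)]
    have : (1 - x) / x ^ 2 = 1 / x ^ 2 - 1 / x := by field_simp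
    linarith
  have h0 : 0 ≤ psi x := by unfold psi; positivity
  rw [abs_le]
  have hp : 0 < x ^ (-(3 / 2) : ℝ) := by positivity
  refine ⟨?_, by linarith⟩
  rcases le_total x 1 with h | h
  · have : x ^ (-1 : ℝ) ≤ x ^ (-(3 / 2) : ℝ) :=
      Real.rpow_le_rpow_of_exponent_ge hx h (by norm_num)
    rw [Real.rpow_neg_one, ← one_div] at this
    linarith
  · have : x ^ (-2 : ℝ) ≤ x ^ (-(3 / 2) : ℝ) :=
      Real.rpow_le_rpow_of_exponent_le h (by norm_num)
    have e : x ^ (-2 : ℝ) = 1 / x ^ 2 := by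
      rw [Real.rpow_neg hx.le, one_div]; norm_cast
    linarith

/-- Without truncation at `n`, the mean size is `π² / (12 a²)` up to `O(a ^ (-3/2))`. -/
lemma mean_occ_bound : ∃ C : ℝ, 0 ≤ C ∧ ∀ a : ℝ, 0 < a →
    Summable (fun k : ℕ => ((k : ℝ) + 1) * occ a (k + 1)) ∧
    |∑' k : ℕ, ((k : ℝ) + 1) * occ a (k + 1) - Real.pi ^ 2 / (12 * a ^ 2)|
      ≤ C * a ^ (-(3 / 2) : ℝ) := by
  have hsC : Summable (fun j : ℕ => 2 * ((j : ℝ) + 1) ^ (-(3 / 2) : ℝ)) := by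
    refine Summable.mul_left 2 ?_
    have := (summable_nat_add_iff 1).2 (Real.summable_nat_rpow.2 (by norm_num : (-(3 / 2) : ℝ) < -1))
    simpa using this
  refine ⟨∑' j : ℕ, 2 * ((j : ℝ) + 1) ^ (-(3 / 2) : ℝ), tsum_nonneg fun j => by positivity,
    fun a ha => ?_⟩
  obtain ⟨h1, h2⟩ := hasSum_occ (fun k : ℕ => (k : ℝ) + 1) (fun k => by positivity)
    (fun s => s / (1 - s) ^ 2) (fun s h0 h1 => by
      have := hasSum_coe_mul_geometric_of_norm_lt_one (r := s)
        (by rwa [Real.norm_eq_abs, abs_of_pos h0])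
      have := (hasSum_nat_add_iff' 1).2 this
      simpa using this) a ha
  refine ⟨h1, ?_⟩
  have h3 := hasSum_eta_two.mul_left (1 / a ^ 2)
  have h4 := h2.sub h3
  have e : 1 / a ^ 2 * (Real.pi ^ 2 / 12) = Real.pi ^ 2 / (12 * a ^ 2) := by field_simp
  rw [e] at h4
  rw [← h4.tsum_eq, mul_comm, ← tsum_mul_left]
  refine (norm_tsum_le_tsum_norm h4.summable.norm).trans
    (Summable.tsum_le_tsum (fun j => ?_) h4.summable.norm (hsC.mul_left _))
  have b1 := psi_bound (x := a * (2 * j + 1)) (by positivity)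
  have b2 := psi_bound (x := a * (2 * j + 2)) (by positivity)
  have c1 : (a * (2 * j + 1)) ^ (-(3 / 2) : ℝ) ≤ a ^ (-(3 / 2) : ℝ) * ((j : ℝ) + 1) ^ (-(3 / 2) : ℝ) := by
    rw [Real.mul_rpow ha.le (by positivity)]
    gcongr ?_ * ?_
    exact Real.rpow_le_rpow_of_nonpos (by positivity) (by linarith [(Nat.cast_nonneg j : (0:ℝ) ≤ j)]) (by norm_num)
  have c2 : (a * (2 * j + 2)) ^ (-(3 / 2) : ℝ) ≤ a ^ (-(3 / 2) : ℝ) * ((j : ℝ) + 1) ^ (-(3 / 2) : ℝ) := by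
    rw [Real.mul_rpow ha.le (by positivity)]
    gcongr ?_ * ?_
    exact Real.rpow_le_rpow_of_nonpos (by positivity) (by linarith [(Nat.cast_nonneg j : (0:ℝ) ≤ j)]) (by norm_num)
  rw [Real.norm_eq_abs]
  have e2 : Real.exp (-(a * (2 * j + 1))) / (1 - Real.exp (-(a * (2 * j + 1)))) ^ 2 -
      Real.exp (-(a * (2 * j + 2))) / (1 - Real.exp (-(a * (2 * j + 2)))) ^ 2 -
      1 / a ^ 2 * (1 / (2 * (j:ℝ) + 1) ^ 2 - 1 / (2 * (j:ℝ) + 2) ^ 2) =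
      (psi (a * (2 * j + 1)) - 1 / (a * (2 * j + 1)) ^ 2) -
      (psi (a * (2 * j + 2)) - 1 / (a * (2 * j + 2)) ^ 2) := by
    simp only [psi, mul_pow]
    field_simp
    ring
  rw [e2]
  refine (abs_sub _ _).trans ?_
  linarith

lemma sq_exp_bound {a : ℝ} (ha : 0 < a) :
    Summable (fun k : ℕ => ((k : ℝ) + 1) ^ 2 * Real.exp (-(a * (k + 1)))) ∧
    ∑' k : ℕ, ((k : ℝ) + 1) ^ 2 * Real.exp (-(a * (k + 1))) ≤ 16 / a ^ 3 := by
  have hb : ∀ k : ℕ, ((k : ℝ) + 1) ^ 2 * Real.exp (-(a * (k + 1))) ≤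
      8 / a ^ 2 * (Real.exp (-(a / 2)) * Real.exp (-(a / 2)) ^ k) := by
    intro k
    set y := a * ((k : ℝ) + 1) with hy
    have hy0 : 0 < y := by positivity
    have h1 : y ^ 2 ≤ 8 * Real.exp (y / 2) := by
      have := Real.quadratic_le_exp_of_nonneg (x := y / 2) (by positivity)
      nlinarith
    have h2 : Real.exp (-(a / 2)) * Real.exp (-(a / 2)) ^ k = Real.exp (-(y / 2)) := by
      rw [← Real.exp_nat_mul, ← Real.exp_add, hy]; ring_nf
    have h3 : Real.exp (-y) = Real.exp (-(y / 2)) * Real.exp (-(y / 2)) := by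
      rw [← Real.exp_add]; ring_nf
    have h4 : Real.exp (y / 2) * Real.exp (-(y / 2)) = 1 := by
      rw [← Real.exp_add]; simp
    have h5 : ((k : ℝ) + 1) ^ 2 = y ^ 2 / a ^ 2 := by rw [hy]; field_simp
    rw [h2, h3, h5, div_mul_eq_mul_div, div_mul_eq_mul_div]
    refine div_le_div_of_nonneg_right ?_ (by positivity)
    calc y ^ 2 * (Real.exp (-(y / 2)) * Real.exp (-(y / 2)))
        ≤ 8 * Real.exp (y / 2) * (Real.exp (-(y / 2)) * Real.exp (-(y / 2))) := by gcongr
      _ = 8 * (Real.exp (y / 2) * Real.exp (-(y / 2))) * Real.exp (-(y / 2)) := by ring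
      _ = _ := by rw [h4, mul_one]
  have hr1 : Real.exp (-(a / 2)) < 1 := exp_neg_lt_one (by positivity)
  have hg := ((hasSum_geometric_of_lt_one (Real.exp_pos _).le hr1).mul_left
    (Real.exp (-(a / 2)))).mul_left (8 / a ^ 2)
  have hs := Summable.of_nonneg_of_le (fun k => by positivity) hb hg.summable
  refine ⟨hs, (hs.tsum_le_tsum hb hg.summable).trans ?_⟩
  rw [hg.tsum_eq]
  have h6 : Real.exp (-(a / 2)) * (1 - Real.exp (-(a / 2)))⁻¹ ≤ 2 / a := by
    have := Real.add_one_le_exp (a / 2)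
    have h4 : Real.exp (a / 2) * Real.exp (-(a / 2)) = 1 := by
      rw [← Real.exp_add]; simp
    have : 0 < 1 - Real.exp (-(a / 2)) := by linarith
    rw [← div_eq_mul_inv, div_le_div_iff₀ this ha]
    nlinarith [Real.exp_pos (-(a / 2))]
  calc _ ≤ 8 / a ^ 2 * (2 / a) := by gcongr
    _ = _ := by field_simp; norm_num

/-! ### From weighted sets to distinct parts partitions -/

/-- The finsets of positive integers at most `n` with sum `m`. -/
def sumSets (n m : ℕ) : Finset (Finset ℕ) := {A ∈ (Ioc 0 n).powerset | ∑ k ∈ A, k = m}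

lemma mem_sumSets {n m : ℕ} {A : Finset ℕ} :
    A ∈ sumSets n m ↔ A ⊆ Ioc 0 n ∧ ∑ k ∈ A, k = m := by
  simp [sumSets]

/-- Adding `n - m` to the largest element is an injection from the sets of sum `m` to the sets of
sum `n`. -/
lemma card_sumSets_mono {n m : ℕ} (hm : 1 ≤ m) (hmn : m ≤ n) :
    #(sumSets n m) ≤ #(sumSets n n) := by
  classical
  set d := n - m with hd
  set f : Finset ℕ → Finset ℕ := fun A => insert (A.sup id + d) (A.erase (A.sup id)) with hf
  have hne : ∀ A ∈ sumSets n m, A.Nonempty := by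
    intro A hA
    rw [Finset.nonempty_iff_ne_empty]
    rintro rfl
    have := (mem_sumSets.1 hA).2
    simp at this; omega
  have hmem : ∀ A : Finset ℕ, A.Nonempty → A.sup id ∈ A := by
    intro A hA
    obtain ⟨x, hx, h⟩ := Finset.exists_mem_eq_sup A hA id
    rw [h]; exact hx
  have hlt : ∀ A : Finset ℕ, ∀ k ∈ A.erase (A.sup id), k < A.sup id := by
    intro A k hk
    rw [Finset.mem_erase] at hk
    exact lt_of_le_of_ne (Finset.le_sup (f := id) hk.2) hk.1
  have hnot : ∀ A : Finset ℕ, A.sup id + d ∉ A.erase (A.sup id) := fun A h => by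
    have := hlt A _ h; omega
  have hsup : ∀ A : Finset ℕ, (f A).sup id = A.sup id + d := by
    intro A
    simp only [hf, Finset.sup_insert, id]
    refine max_eq_left (Finset.sup_le fun k hk => ?_)
    have := hlt A k hk
    simp only [id]; omega
  refine Finset.card_le_card_of_injOn f ?_ ?_
  · intro A hA
    have hA' := mem_sumSets.1 (Finset.mem_coe.1 hA)
    have hx := hmem A (hne A hA)
    have hsum : ∑ k ∈ f A, k = n := by
      have h1 := Finset.add_sum_erase A (fun k => k) hx
      simp only [hf]
      rw [Finset.sum_insert (hnot A)]
      have := hA'.2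
      omega
    refine Finset.mem_coe.2 (mem_sumSets.2 ⟨fun k hk => ?_, hsum⟩)
    rw [Finset.mem_Ioc]
    constructor
    · simp only [hf, Finset.mem_insert, Finset.mem_erase] at hk
      have h0 := (Finset.mem_Ioc.1 (hA'.1 hx)).1
      rcases hk with hk | hk
      · omega
      · exact (Finset.mem_Ioc.1 (hA'.1 hk.2)).1
    · rw [← hsum]
      exact Finset.single_le_sum (f := fun k => k) (fun _ _ => Nat.zero_le _) hk
  · intro A hA B hB hAB
    have hs : A.sup id = B.sup id := by
      have := hsup A; rw [hAB, hsup B] at this; omega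
    have hAx := hmem A (hne A hA)
    have hBx := hmem B (hne B hB)
    have he : A.erase (A.sup id) = B.erase (B.sup id) := by
      have h1 : (f A).erase ((f A).sup id) = A.erase (A.sup id) := by
        rw [hsup]; simp only [hf]; exact Finset.erase_insert (hnot A)
      have h2 : (f B).erase ((f B).sup id) = B.erase (B.sup id) := by
        rw [hsup]; simp only [hf]; exact Finset.erase_insert (hnot B)
      rw [← h1, ← h2, hAB]
    rw [← Finset.insert_erase hAx, ← Finset.insert_erase hBx, he, hs]

lemma toFinset_mem_sumSets {n : ℕ} {lam : Nat.Partition n} (h : lam ∈ Nat.Partition.distincts n) :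
    lam.parts.toFinset ∈ sumSets n n := by
  have hnd : lam.parts.Nodup := by simpa [Nat.Partition.distincts] using h
  have hsum : ∑ k ∈ lam.parts.toFinset, k = n := by
    rw [Finset.sum_eq_multiset_sum, Multiset.map_id', Multiset.toFinset_val, hnd.dedup,
      lam.parts_sum]
  refine mem_sumSets.2 ⟨fun k hk => ?_, hsum⟩
  have hk' := Multiset.mem_toFinset.1 hk
  rw [Finset.mem_Ioc]
  refine ⟨lam.parts_pos hk', ?_⟩
  rw [← hsum]
  exact Finset.single_le_sum (f := fun k => k) (fun _ _ => Nat.zero_le _) hk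

/-- A distinct parts partition is determined by its set of parts. -/
lemma card_distincts_filter_le {n : ℕ} (P : Nat.Partition n → Prop) (Q : Finset ℕ → Prop)
    [DecidablePred P] [DecidablePred Q]
    (hPQ : ∀ lam ∈ Nat.Partition.distincts n, P lam → Q lam.parts.toFinset) :
    #{lam ∈ Nat.Partition.distincts n | P lam} ≤ #{A ∈ sumSets n n | Q A} := by
  refine Finset.card_le_card_of_injOn (fun lam => lam.parts.toFinset) ?_ ?_
  · intro lam hlam
    have h := Finset.mem_filter.1 (Finset.mem_coe.1 hlam)
    exact Finset.mem_coe.2 (Finset.mem_filter.2 ⟨toFinset_mem_sumSets h.1, hPQ lam h.1 h.2⟩)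
  · intro l1 h1 l2 h2 h
    have n1 : l1.parts.Nodup := by
      simpa [Nat.Partition.distincts] using (Finset.mem_filter.1 (Finset.mem_coe.1 h1)).1
    have n2 : l2.parts.Nodup := by
      simpa [Nat.Partition.distincts] using (Finset.mem_filter.1 (Finset.mem_coe.1 h2)).1
    apply Nat.Partition.ext
    rw [← n1.dedup, ← n2.dedup]
    exact congrArg Finset.val h

lemma card_sumSets_le_distincts (n : ℕ) : #(sumSets n n) ≤ #(Nat.Partition.distincts n) := by
  classical
  refine Finset.card_le_card_of_surjOn (fun lam : Nat.Partition n => lam.parts.toFinset) ?_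
  intro A hA
  have h := mem_sumSets.1 (Finset.mem_coe.1 hA)
  refine ⟨⟨A.val, fun {i} hi => (Finset.mem_Ioc.1 (h.1 hi)).1, ?_⟩, ?_, ?_⟩
  · have := h.2
    rwa [Finset.sum_eq_multiset_sum, Multiset.map_id'] at this
  · simp [Nat.Partition.distincts, A.nodup]
  · simp

/-- Transfer from the Boltzmann measure to the uniform one: the sets of sum `n` on which
`∑ k ∈ A, c k` deviates from its Boltzmann mean by at least `s` are few compared with all sets of sum
`n`. The hypotheses `hV`, `hup`, `hlo` say that with probability at least `1/2` the sum of the random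
set is in `[1, n]` and within `R` of its mean. -/
lemma bad_le {n : ℕ} {a t s R E : ℝ} (c : ℕ → ℝ) (ha : 0 < a) (ht : 0 ≤ t)
    (hc : ∀ k ∈ Ioc 0 n, |t * c k| ≤ 1)
    (hE : t ^ 2 * ∑ k ∈ Ioc 0 n, c k ^ 2 - t * s ≤ E) (hR : 0 < R)
    (hV : 2 * ∑ k ∈ Ioc 0 n, Real.exp (-(a * k)) * (k : ℝ) ^ 2 ≤ R ^ 2)
    (hup : ∑ k ∈ Ioc 0 n, occ a k * k + R ≤ n) (hlo : R < ∑ k ∈ Ioc 0 n, occ a k * k)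
    (B : Finset (Finset ℕ)) (hB : B ⊆ sumSets n n)
    (hbad : ∀ A ∈ B, s ≤ |∑ k ∈ A, c k - ∑ k ∈ Ioc 0 n, occ a k * c k|) :
    (#B : ℝ) ≤ 4 * n * Real.exp (a * (n - (∑ k ∈ Ioc 0 n, occ a k * k - R)) + E)
      * #(sumSets n n) := by
  classical
  set S := Ioc 0 n with hS
  set M := ∑ k ∈ S, occ a k * k with hM
  set x : ℕ → ℝ := fun k => Real.exp (-(a * k)) with hx
  have hx0 : ∀ k, 0 < x k := fun k => Real.exp_pos _
  have hw : ∀ A : Finset ℕ, ∏ k ∈ A, x k = Real.exp (-(a * ∑ k ∈ A, (k : ℝ))) := by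
    intro A
    rw [hx, ← Real.exp_sum, Finset.sum_neg_distrib, Finset.mul_sum]
  set Z := ∏ k ∈ S, (1 + x k) with hZ
  have hZ0 : 0 < Z := Finset.prod_pos fun k _ => by have := hx0 k; positivity
  have h1 := chernoff S x c t s ht (fun k _ => hx0 k) hc B
    (hB.trans (Finset.filter_subset _ _)) hbad
  have h1' : #B * Real.exp (-(a * n)) ≤ Z * (2 * Real.exp E) := by
    have e : ∑ A ∈ B, ∏ k ∈ A, x k = #B * Real.exp (-(a * n)) := by
      rw [Finset.sum_congr rfl (g := fun _ => Real.exp (-(a * n))), Finset.sum_const, nsmul_eq_mul]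
      intro A hA
      rw [hw]
      have := (mem_sumSets.1 (hB hA)).2
      rw [← Nat.cast_sum, this]
    rw [← e]
    refine h1.trans ?_
    gcongr
  have h2 := half_le_window S x (fun k => (k : ℝ)) hx0 R hR hV
  set G : Finset (Finset ℕ) := {A ∈ S.powerset | |∑ k ∈ A, ((k : ℕ) : ℝ) - ∑ k ∈ S, x k / (1 + x k) * (k : ℝ)| ≤ R} with hG
  have hGw : ∀ A ∈ G, |∑ k ∈ A, ((k : ℕ) : ℝ) - M| ≤ R := fun A hA =>
    (Finset.mem_filter.1 hA).2
  have h3 : ∑ A ∈ G, ∏ k ∈ A, x k ≤ #G * Real.exp (-(a * (M - R))) := by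
    rw [← nsmul_eq_mul]
    refine Finset.sum_le_card_nsmul _ _ _ fun A hA => ?_
    rw [hw, Real.exp_le_exp, neg_le_neg_iff]
    have := (abs_le.1 (hGw A hA)).1
    gcongr
    linarith
  have h4 : #G ≤ n * #(sumSets n n) := by
    have hsub : G ⊆ (Finset.Icc 1 n).biUnion (fun m => sumSets n m) := by
      intro A hA
      obtain ⟨b1, b2⟩ := abs_le.1 (hGw A hA)
      rw [Finset.mem_biUnion]
      refine ⟨∑ k ∈ A, k, ?_, mem_sumSets.2 ⟨Finset.mem_powerset.1 (Finset.mem_filter.1 hA).1, rfl⟩⟩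
      rw [Finset.mem_Icc]
      constructor
      · have : (0 : ℝ) < ((∑ k ∈ A, k : ℕ) : ℝ) := by push_cast; linarith
        exact_mod_cast this
      · have : ((∑ k ∈ A, k : ℕ) : ℝ) ≤ n := by push_cast; linarith
        exact_mod_cast this
    calc #G ≤ _ := Finset.card_le_card hsub
      _ ≤ ∑ m ∈ Finset.Icc 1 n, #(sumSets n m) := Finset.card_biUnion_le
      _ ≤ ∑ m ∈ Finset.Icc 1 n, #(sumSets n n) := Finset.sum_le_sum fun m hm => by
        rw [Finset.mem_Icc] at hm
        exact card_sumSets_mono hm.1 hm.2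
      _ = _ := by simp
  have h4' : (#G : ℝ) ≤ n * #(sumSets n n) := by exact_mod_cast h4
  have h5 : Z ≤ 2 * (n * #(sumSets n n) * Real.exp (-(a * (M - R)))) := by
    have : #G * Real.exp (-(a * (M - R))) ≤ n * #(sumSets n n) * Real.exp (-(a * (M - R))) := by
      gcongr
    linarith
  have e1 : Real.exp (a * n) * Real.exp (-(a * n)) = 1 := by rw [← Real.exp_add]; simp
  calc (#B : ℝ) = Real.exp (a * n) * (#B * Real.exp (-(a * n))) := by
        rw [mul_left_comm, e1, mul_one]
    _ ≤ Real.exp (a * n) * (2 * (n * #(sumSets n n) * Real.exp (-(a * (M - R))))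
          * (2 * Real.exp E)) := by
        refine mul_le_mul_of_nonneg_left (h1'.trans ?_) (Real.exp_pos _).le
        gcongr
    _ = 4 * n * (Real.exp (a * n) * Real.exp (-(a * (M - R))) * Real.exp E) * #(sumSets n n) := by
        ring
    _ = _ := by
        rw [← Real.exp_add, ← Real.exp_add]; ring_nf

/-! ### Truncated sums -/

lemma sum_Ioc_zero_eq (f : ℕ → ℝ) (n : ℕ) :
    ∑ k ∈ Ioc 0 n, f k = ∑ k ∈ range n, f (k + 1) := by
  induction n with
  | zero => simp
  | succ n ih => rw [Finset.sum_range_succ, ← ih, Finset.sum_Ioc_succ_top (Nat.zero_le n)]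

lemma sum_Ioc_eq (f : ℕ → ℝ) {K n : ℕ} (h : K ≤ n) :
    ∑ k ∈ Ioc K n, f k = ∑ k ∈ range n, f (k + 1) - ∑ k ∈ range K, f (k + 1) := by
  rw [← sum_Ioc_zero_eq, ← sum_Ioc_zero_eq, eq_sub_iff_add_eq, add_comm]
  exact Finset.sum_Ioc_consecutive f (Nat.zero_le K) h

/-- Truncation error for sums of occupation probabilities; `g k` is the coefficient of the part
`k + 1`. -/
lemma tail_bound {a ε : ℝ} (ha : 0 < a) (g : ℕ → ℝ) (hg : ∀ k, 0 ≤ g k) (n : ℕ)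
    (hε : ∀ k, n ≤ k → g k ≤ ε * ((k : ℝ) + 1) ^ 2) (hε0 : 0 ≤ ε)
    (hs : Summable (fun k => g k * occ a (k + 1))) :
    |∑ k ∈ range n, g k * occ a (k + 1) - ∑' k, g k * occ a (k + 1)| ≤ ε * (16 / a ^ 3) := by
  obtain ⟨h1, h2⟩ := sq_exp_bound ha
  rw [← hs.sum_add_tsum_nat_add n, sub_add_cancel_left, abs_neg, abs_of_nonneg
    (tsum_nonneg fun k => mul_nonneg (hg _) (occ_nonneg _ _))]
  have hs' := (summable_nat_add_iff n).2 hs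
  have h1' := (summable_nat_add_iff n).2 h1
  calc ∑' k, g (k + n) * occ a (k + n + 1)
      ≤ ∑' k, ε * ((((k + n : ℕ) : ℝ) + 1) ^ 2 * Real.exp (-(a * (((k + n : ℕ) : ℝ) + 1)))) := by
        refine hs'.tsum_le_tsum (fun k => ?_) (h1'.mul_left ε)
        rw [← mul_assoc]
        have := occ_le a (k + n + 1)
        refine mul_le_mul (hε _ (by omega)) (this.trans (le_of_eq ?_)) (occ_nonneg _ _)
          (by positivity)
        push_cast; ring_nf
    _ = ε * ∑' k, ((((k + n : ℕ) : ℝ) + 1) ^ 2 * Real.exp (-(a * (((k + n : ℕ) : ℝ) + 1)))) :=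
        tsum_mul_left
    _ ≤ ε * (16 / a ^ 3) := by
        refine mul_le_mul_of_nonneg_left (le_trans ?_ h2) hε0
        rw [← h1.sum_add_tsum_nat_add n]
        exact le_add_of_nonneg_left (Finset.sum_nonneg fun k _ => by positivity)

/-- For small parts `occ a k` is close to `1/2`, so the sum is close to the harmonic number of `K`. -/
lemma harmonic_small {a : ℝ} (K : ℕ) (hK : 1 ≤ K) (ha : 0 < a) :
    |∑ k ∈ range K, 2 / ((k : ℝ) + 1) * occ a (k + 1) -
      (Real.log K + Real.eulerMascheroniConstant)| ≤ a * K + 1 / K := by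
  have hK' : (0 : ℝ) < K := by exact_mod_cast hK
  have hb : ∀ k : ℕ, 0 ≤ ((k : ℝ) + 1)⁻¹ - 2 / ((k : ℝ) + 1) * occ a (k + 1) ∧
      ((k : ℝ) + 1)⁻¹ - 2 / ((k : ℝ) + 1) * occ a (k + 1) ≤ a := by
    intro k
    have hk : (0 : ℝ) < (k : ℝ) + 1 := by positivity
    have e : ((k : ℝ) + 1)⁻¹ - 2 / ((k : ℝ) + 1) * occ a (k + 1) =
        (1 - Real.exp (-(a * ((k : ℝ) + 1)))) / (1 + Real.exp (-(a * ((k : ℝ) + 1)))) / ((k : ℝ) + 1) := by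
      unfold occ
      push_cast
      have := Real.exp_pos (-(a * ((k : ℝ) + 1)))
      field_simp; ring
    rw [e]
    have h1 := Real.exp_pos (-(a * ((k : ℝ) + 1)))
    have h2 := one_sub_exp_pos (x := a * ((k : ℝ) + 1)) (by positivity)
    have h3 := Real.add_one_le_exp (-(a * ((k : ℝ) + 1)))
    refine ⟨by positivity, ?_⟩
    rw [div_le_iff₀ hk]
    exact (div_le_self h2.le (by linarith)).trans (by linarith)
  have hH : ((harmonic K : ℚ) : ℝ) = ∑ k ∈ range K, ((k : ℝ) + 1)⁻¹ := by
    simp [harmonic]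
  have hd0 : 0 ≤ ∑ k ∈ range K, (((k : ℝ) + 1)⁻¹ - 2 / ((k : ℝ) + 1) * occ a (k + 1)) :=
    Finset.sum_nonneg fun k _ => (hb k).1
  have hd1 : ∑ k ∈ range K, (((k : ℝ) + 1)⁻¹ - 2 / ((k : ℝ) + 1) * occ a (k + 1)) ≤ a * K := by
    refine (Finset.sum_le_card_nsmul _ _ a fun k _ => (hb k).2).trans (le_of_eq ?_)
    simp; ring
  rw [Finset.sum_sub_distrib, ← hH] at hd0 hd1
  have g1 := Real.eulerMascheroniSeq_lt_eulerMascheroniConstant K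
  have g2 := Real.eulerMascheroniConstant_lt_eulerMascheroniSeq' K
  rw [Real.eulerMascheroniSeq'] at g2
  rw [Real.eulerMascheroniSeq] at g1
  simp only [show K ≠ 0 by omega, if_false] at g2
  have g3 := log_succ_sub_log_le hK'
  have : 0 < a * K := by positivity
  have : 0 < 1 / (K : ℝ) := by positivity
  rw [abs_le]
  constructor <;> linarith

/-- The mean of the statistic under the Boltzmann measure; `J` is a free parameter, to be chosen with
`1 / J` and `a * J` both small. -/
lemma mean_large_parts {a : ℝ} (ha : 0 < a) {K n J : ℕ} (hK : 1 ≤ K) (hKn : K ≤ n) (hJ : 1 ≤ J) :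
    |∑ k ∈ Ioc K n, occ a k * (2 / k) -
      (Real.log (Real.pi / (2 * a)) - Real.log K - Real.eulerMascheroniConstant)|
      ≤ a * K + 1 / K + 32 / (n ^ 3 * a ^ 3) + (1 / (2 * J) + 2 * a * J) := by
  obtain ⟨hs, hT⟩ := harmonic_occ_bound ha
  have hT := hT J hJ
  have hn : (0 : ℝ) < n := by exact_mod_cast (by omega : 0 < n)
  have h1 := tail_bound ha (fun k : ℕ => 2 / ((k : ℝ) + 1)) (fun k => by positivity) n
    (ε := 2 / n ^ 3) (fun k hk => by
      have hk' : (n : ℝ) ≤ (k : ℝ) + 1 := by exact_mod_cast (by omega : n ≤ k + 1)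
      rw [div_mul_eq_mul_div, div_le_div_iff₀ (by positivity) (by positivity), mul_assoc, ← pow_succ]
      gcongr) (by positivity) hs
  have h2 := harmonic_small K hK ha
  have e : 2 / (n : ℝ) ^ 3 * (16 / a ^ 3) = 32 / (n ^ 3 * a ^ 3) := by
    field_simp; norm_num
  rw [e] at h1
  have e2 : ∀ N : ℕ, ∑ k ∈ range N, occ a (k + 1) * (2 / ((k + 1 : ℕ) : ℝ)) =
      ∑ k ∈ range N, 2 / ((k : ℝ) + 1) * occ a (k + 1) := fun N =>
    Finset.sum_congr rfl fun k _ => by push_cast; ring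
  rw [sum_Ioc_eq _ hKn, e2, e2]
  rw [abs_le] at *
  constructor <;> linarith [hT.1, hT.2, h1.1, h1.2, h2.1, h2.2]

lemma mean_size : ∃ C : ℝ, 0 ≤ C ∧ ∀ (a : ℝ) (n : ℕ), 0 < a → 1 ≤ n →
    |∑ k ∈ Ioc 0 n, occ a k * k - Real.pi ^ 2 / (12 * a ^ 2)|
      ≤ C * a ^ (-(3 / 2) : ℝ) + 16 / (n * a ^ 3) := by
  obtain ⟨C, hC, h⟩ := mean_occ_bound
  refine ⟨C, hC, fun a n ha hn => ?_⟩
  obtain ⟨hs, hM⟩ := h a ha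
  have hn' : (0 : ℝ) < n := by exact_mod_cast hn
  have h1 := tail_bound ha (fun k : ℕ => (k : ℝ) + 1) (fun k => by positivity) n
    (ε := 1 / n) (fun k hk => by
      have hk' : (n : ℝ) ≤ (k : ℝ) + 1 := by exact_mod_cast (by omega : n ≤ k + 1)
      rw [div_mul_eq_mul_div, le_div_iff₀ hn']
      nlinarith) (by positivity) hs
  have e : 1 / (n : ℝ) * (16 / a ^ 3) = 16 / (n * a ^ 3) := by field_simp
  rw [e] at h1
  have e2 : ∑ k ∈ range n, occ a (k + 1) * ((k + 1 : ℕ) : ℝ) =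
      ∑ k ∈ range n, ((k : ℝ) + 1) * occ a (k + 1) :=
    Finset.sum_congr rfl fun k _ => by push_cast; ring
  rw [sum_Ioc_zero_eq, e2]
  rw [abs_le] at *
  constructor <;> linarith [hM.1, hM.2, h1.1, h1.2]

lemma sq_sum_le {a : ℝ} (ha : 0 < a) (n : ℕ) :
    ∑ k ∈ Ioc 0 n, Real.exp (-(a * k)) * (k : ℝ) ^ 2 ≤ 16 / a ^ 3 := by
  obtain ⟨h1, h2⟩ := sq_exp_bound ha
  rw [sum_Ioc_zero_eq]
  refine le_trans (le_of_eq ?_) ((h1.sum_le_tsum (range n) fun k _ => by positivity).trans h2)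
  exact Finset.sum_congr rfl fun k _ => by push_cast; ring

/-! ### Choice of the parameters -/

lemma Kn_bounds {n : ℕ} (hn : 1 ≤ n) :
    1 ≤ Kn n ∧ Kn n ≤ n ∧ (Kn n : ℝ) ≤ (n : ℝ) ^ (1 / 3 : ℝ) ∧
      (n : ℝ) ^ (1 / 3 : ℝ) ≤ 2 * Kn n := by
  have hn' : (1 : ℝ) ≤ n := by exact_mod_cast hn
  have h1 : (1 : ℝ) ≤ (n : ℝ) ^ (1 / 3 : ℝ) := Real.one_le_rpow hn' (by norm_num)
  have h2 : (Kn n : ℝ) ≤ (n : ℝ) ^ (1 / 3 : ℝ) := Nat.floor_le (by positivity)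
  have h3 : (n : ℝ) ^ (1 / 3 : ℝ) < Kn n + 1 := Nat.lt_floor_add_one _
  have h4 : 1 ≤ Kn n := Nat.le_floor (by exact_mod_cast h1)
  have h5 : (n : ℝ) ^ (1 / 3 : ℝ) ≤ n := by
    simpa using Real.rpow_le_rpow_of_exponent_le hn' (by norm_num : (1 / 3 : ℝ) ≤ 1)
  have h4' : (1 : ℝ) ≤ Kn n := by exact_mod_cast h4
  exact ⟨h4, by exact_mod_cast h2.trans h5, h2, by linarith⟩

/-- The inverse temperature `a` at which the mean size `π² / (12 a²)` is `x`. -/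
noncomputable def temp (x : ℝ) : ℝ := Real.pi / (2 * Real.sqrt (3 * x))

lemma temp_sq {x : ℝ} (hx : 0 < x) : Real.pi ^ 2 / (12 * temp x ^ 2) = x := by
  have h := Real.sq_sqrt (by positivity : (0:ℝ) ≤ 3 * x)
  have : 0 < Real.sqrt (3 * x) := by positivity
  have hpi := Real.pi_pos
  unfold temp
  rw [div_pow, mul_pow, h]
  field_simp
  norm_num

lemma pi_div_temp {x : ℝ} (hx : 0 < x) : Real.pi / (2 * temp x) = Real.sqrt (3 * x) := by
  have : 0 < Real.sqrt (3 * x) := by positivity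
  have hpi := Real.pi_pos
  unfold temp
  field_simp

lemma temp_bounds {n x : ℝ} (hn : 0 < n) (h1 : n / 2 ≤ x) (h2 : x ≤ n) :
    1 / 2 * n ^ (-(1 / 2) : ℝ) ≤ temp x ∧ temp x ≤ 2 * n ^ (-(1 / 2) : ℝ) := by
  have hx : 0 < x := by linarith
  have hs : 0 < Real.sqrt n := by positivity
  have e : n ^ (-(1 / 2) : ℝ) = 1 / Real.sqrt n := by
    rw [Real.rpow_neg hn.le, ← Real.sqrt_eq_rpow, one_div]
  have hpi := Real.pi_gt_three
  have hpi2 := Real.pi_le_four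
  have l1 : Real.sqrt (3 * x) ≤ 2 * Real.sqrt n := by
    rw [Real.sqrt_le_left (by positivity), mul_pow, Real.sq_sqrt hn.le]; linarith
  have l2 : Real.sqrt n ≤ Real.sqrt (3 * x) := Real.sqrt_le_sqrt (by linarith)
  have hs2 : 0 < Real.sqrt (3 * x) := by positivity
  rw [e, temp]
  constructor
  · rw [div_mul_div_comm, div_le_div_iff₀ (by positivity) (by positivity)]
    nlinarith
  · rw [mul_one_div, div_le_div_iff₀ (by positivity) (by positivity)]
    nlinarith

/-- The contribution of the part `k` to the statistic: `2 / k` if `k > K`, and `0` otherwise. -/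
noncomputable def coeff (K : ℕ) (k : ℕ) : ℝ := if K < k then 2 / k else 0

lemma sum_coeff_mul (f : ℕ → ℝ) (K n : ℕ) :
    ∑ k ∈ Ioc 0 n, f k * coeff K k = ∑ k ∈ Ioc K n, f k * (2 / k) := by
  have : Ioc K n = (Ioc 0 n).filter (fun k => K < k) := by
    ext k; simp only [Finset.mem_Ioc, Finset.mem_filter]; omega
  rw [this, Finset.sum_filter]
  exact Finset.sum_congr rfl fun k _ => by simp only [coeff]; split_ifs <;> simp

lemma sum_coeff_sq {K n : ℕ} (hK : 1 ≤ K) (hKn : K ≤ n) :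
    ∑ k ∈ Ioc 0 n, coeff K k ^ 2 ≤ 4 / K := by
  have h := sum_Ioc_inv_sq_le_sub (α := ℝ) (by omega : K ≠ 0) hKn
  have hn : (0 : ℝ) ≤ (n : ℝ)⁻¹ := by positivity
  simp only [sq (coeff K _)]
  rw [sum_coeff_mul]
  have e : ∀ k ∈ Ioc K n, coeff K k * (2 / (k : ℝ)) = 4 * ((k : ℝ) ^ 2)⁻¹ := by
    intro k hk
    have := (Finset.mem_Ioc.1 hk).1
    have hk0 : (k : ℝ) ≠ 0 := by exact_mod_cast (by omega : k ≠ 0)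
    simp only [coeff, this, if_true]
    field_simp; norm_num
  rw [Finset.sum_congr rfl e, ← Finset.mul_sum, div_eq_mul_inv]
  linarith

lemma abs_coeff_le {K : ℕ} (hK : 1 ≤ K) (k : ℕ) : |coeff K k| ≤ 2 / K := by
  have hK' : (0 : ℝ) < K := by exact_mod_cast hK
  unfold coeff
  split_ifs with h
  · have : (K : ℝ) ≤ k := by exact_mod_cast h.le
    rw [abs_of_nonneg (by positivity)]
    gcongr
  · simp; positivity

lemma sum_X_eq {n : ℕ} {lam : Nat.Partition n} (h : lam ∈ Nat.Partition.distincts n) (K : ℕ) :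
    ∑ k ∈ Finset.Ioc K n, 2 * (X lam k : ℝ) / k = ∑ k ∈ lam.parts.toFinset, coeff K k := by
  classical
  have hnd : lam.parts.Nodup := by simpa [Nat.Partition.distincts] using h
  have hsub := (mem_sumSets.1 (toFinset_mem_sumSets h)).1
  have e : ∀ k ∈ Ioc K n, 2 * (X lam k : ℝ) / k =
      (if k ∈ lam.parts.toFinset then (1 : ℝ) else 0) * (2 / k) := by
    intro k _
    rw [X, Multiset.count_eq_of_nodup hnd]
    simp only [Multiset.mem_toFinset]
    split_ifs <;> simp
  rw [Finset.sum_congr rfl e, ← sum_coeff_mul]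
  simp only [ite_mul, one_mul, zero_mul]
  rw [← Finset.sum_filter, Finset.filter_mem_eq_inter, Finset.inter_eq_right.2 hsub]

lemma rpow_split {n : ℝ} (hn : 0 < n) {p q r : ℝ} (h : p + q = r) : n ^ p * n ^ q = n ^ r := by
  rw [← h, Real.rpow_add hn]

/-- The Boltzmann mean of the statistic, at inverse temperature `temp (n - D * n ^ (3 / 4))`, differs
from the centering `log (√(3n) / K_n) - γ` by `O(n ^ (-1/6))`. -/
lemma centering {n : ℕ} {D : ℝ} (hn : 1 ≤ n) (hD : 0 ≤ D)
    (hD4 : 4 * D * (n : ℝ) ^ (3 / 4 : ℝ) ≤ n) :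
    |∑ k ∈ Ioc (Kn n) n, occ (temp (n - D * (n : ℝ) ^ (3 / 4 : ℝ))) k * (2 / k)
      - Real.log (Real.sqrt (3 * n) / (Kn n)) + Real.eulerMascheroniConstant|
      ≤ (269 + D) * (n : ℝ) ^ (-(1 / 6) : ℝ) := by
  obtain ⟨hK1, hKn, hKle, hKge⟩ := Kn_bounds hn
  have hn1 : (1 : ℝ) ≤ n := by exact_mod_cast hn
  have hn0 : (0 : ℝ) < n := by linarith
  have hK0 : (0 : ℝ) < Kn n := by exact_mod_cast hK1
  set W := D * (n : ℝ) ^ (3 / 4 : ℝ) with hW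
  have hW0 : 0 ≤ W := by positivity
  have hx0 : 0 < (n : ℝ) - W := by linarith
  obtain ⟨ta, tb⟩ := temp_bounds (x := n - W) hn0 (by linarith) (by linarith)
  set a := temp (n - W) with ha
  have ha0 : 0 < a := lt_of_lt_of_le (by positivity) ta
  -- any power of `n` strictly between `0` and `1/2` makes `1 / J` and `a * J` tend to `0`; the exponent
  -- `1/4` balances them
  set J := ⌈(n : ℝ) ^ (1 / 4 : ℝ)⌉₊ with hJ
  have hq1 : (1 : ℝ) ≤ (n : ℝ) ^ (1 / 4 : ℝ) := Real.one_le_rpow hn1 (by norm_num)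
  have hJge : (n : ℝ) ^ (1 / 4 : ℝ) ≤ J := Nat.le_ceil _
  have hJle : (J : ℝ) ≤ 2 * (n : ℝ) ^ (1 / 4 : ℝ) := by
    have := Nat.ceil_lt_add_one (by linarith : 0 ≤ (n : ℝ) ^ (1 / 4 : ℝ))
    linarith
  have hJ0 : (1 : ℝ) ≤ J := by linarith
  have hJ1 : 1 ≤ J := by exact_mod_cast hJ0
  have main := mean_large_parts ha0 hK1 hKn hJ1
  rw [pi_div_temp hx0] at main
  have mono : ∀ p : ℝ, p ≤ -(1 / 6) → (n : ℝ) ^ p ≤ (n : ℝ) ^ (-(1 / 6) : ℝ) := fun p hp =>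
    Real.rpow_le_rpow_of_exponent_le hn1 hp
  have b1 : a * Kn n ≤ 2 * (n : ℝ) ^ (-(1 / 6) : ℝ) := by
    calc a * Kn n ≤ 2 * (n : ℝ) ^ (-(1 / 2) : ℝ) * (n : ℝ) ^ (1 / 3 : ℝ) := by gcongr
      _ = _ := by rw [mul_assoc, rpow_split hn0 (r := -(1 / 6)) (by norm_num)]
  have b2 : 1 / (Kn n : ℝ) ≤ 2 * (n : ℝ) ^ (-(1 / 6) : ℝ) := by
    calc 1 / (Kn n : ℝ) ≤ 2 * (n : ℝ) ^ (-(1 / 3) : ℝ) := by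
          rw [Real.rpow_neg hn0.le, ← div_eq_mul_inv, div_le_div_iff₀ hK0 (by positivity)]
          linarith
      _ ≤ _ := by gcongr 2 * ?_; exact mono _ (by norm_num)
  have b3 : 32 / ((n : ℝ) ^ 3 * a ^ 3) ≤ 256 * (n : ℝ) ^ (-(1 / 6) : ℝ) := by
    have h1 : (1 / 2 * (n : ℝ) ^ (-(1 / 2) : ℝ)) ^ 3 ≤ a ^ 3 := by gcongr
    have h2 : (n : ℝ) ^ (1 : ℝ) ≤ (n : ℝ) ^ 3 * ((n : ℝ) ^ (-(1 / 2) : ℝ)) ^ 3 := by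
      rw [← Real.rpow_natCast, ← Real.rpow_natCast, ← Real.rpow_mul hn0.le, ← Real.rpow_add hn0]
      exact Real.rpow_le_rpow_of_exponent_le hn1 (by norm_num)
    have h3 : (n : ℝ) ^ (1 : ℝ) / 8 ≤ (n : ℝ) ^ 3 * a ^ 3 := by
      calc (n : ℝ) ^ (1 : ℝ) / 8 ≤ (n : ℝ) ^ 3 * ((n : ℝ) ^ (-(1 / 2) : ℝ)) ^ 3 / 8 := by gcongr
        _ = (n : ℝ) ^ 3 * (1 / 2 * (n : ℝ) ^ (-(1 / 2) : ℝ)) ^ 3 := by ring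
        _ ≤ _ := by gcongr
    calc 32 / ((n : ℝ) ^ 3 * a ^ 3) ≤ 32 / ((n : ℝ) ^ (1 : ℝ) / 8) := by gcongr
      _ = 256 * (n : ℝ) ^ (-1 : ℝ) := by
          rw [Real.rpow_neg hn0.le]; field_simp; norm_num
      _ ≤ _ := by gcongr 256 * ?_; exact mono _ (by norm_num)
  have b4 : 1 / (2 * (J : ℝ)) ≤ (n : ℝ) ^ (-(1 / 6) : ℝ) := by
    calc 1 / (2 * (J : ℝ)) ≤ 1 / (n : ℝ) ^ (1 / 4 : ℝ) := by gcongr; linarith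
      _ = (n : ℝ) ^ (-(1 / 4) : ℝ) := by rw [Real.rpow_neg hn0.le, one_div]
      _ ≤ _ := mono _ (by norm_num)
  have b5 : 2 * a * J ≤ 8 * (n : ℝ) ^ (-(1 / 6) : ℝ) := by
    calc 2 * a * J ≤ 2 * (2 * (n : ℝ) ^ (-(1 / 2) : ℝ)) * (2 * (n : ℝ) ^ (1 / 4 : ℝ)) := by gcongr
      _ = 8 * ((n : ℝ) ^ (-(1 / 2) : ℝ) * (n : ℝ) ^ (1 / 4 : ℝ)) := by ring
      _ = 8 * (n : ℝ) ^ (-(1 / 4) : ℝ) := by rw [rpow_split hn0 (r := -(1 / 4)) (by norm_num)]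
      _ ≤ _ := by gcongr 8 * ?_; exact mono _ (by norm_num)
  have hlogs : Real.log (Real.sqrt (3 * n) / Kn n) = Real.log (3 * n) / 2 - Real.log (Kn n) := by
    rw [Real.log_div (by positivity) hK0.ne', Real.log_sqrt (by positivity)]
  have hlogx : Real.log (Real.sqrt (3 * ((n : ℝ) - W))) = Real.log (3 * (n - W)) / 2 := by
    rw [Real.log_sqrt (by positivity)]
  have b6 : |Real.log (3 * ((n : ℝ) - W)) / 2 - Real.log (3 * n) / 2| ≤
      D * (n : ℝ) ^ (-(1 / 6) : ℝ) := by
    have h1 : Real.log (3 * ((n : ℝ) - W)) ≤ Real.log (3 * n) :=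
      Real.log_le_log (by positivity) (by linarith)
    have h2 := Real.log_le_sub_one_of_pos (x := 3 * n / (3 * ((n : ℝ) - W))) (by positivity)
    rw [Real.log_div (by positivity) (by positivity)] at h2
    have h3 : 3 * n / (3 * ((n : ℝ) - W)) - 1 ≤ 2 * (W / n) := by
      rw [mul_div_mul_left _ _ (by norm_num), div_sub_one hx0.ne', mul_div_assoc',
        div_le_div_iff₀ hx0 hn0]
      nlinarith
    have h4 : W / n = D * (n : ℝ) ^ (-(1 / 4) : ℝ) := by
      rw [hW, mul_div_assoc]
      congr 1
      rw [div_eq_mul_inv, ← Real.rpow_neg_one]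
      exact rpow_split hn0 (by norm_num)
    have h5 : D * (n : ℝ) ^ (-(1 / 4) : ℝ) ≤ D * (n : ℝ) ^ (-(1 / 6) : ℝ) := by
      gcongr D * ?_; exact mono _ (by norm_num)
    rw [abs_le]
    constructor <;> linarith
  rw [hlogs]
  rw [hlogx] at main
  rw [abs_le] at main b6 ⊢
  constructor <;> linarith [main.1, main.2, b6.1, b6.2]

set_option maxHeartbeats 2000000 in
/-- Quantitative form of the theorem. The first condition on `n` keeps `n - D * n ^ (3 / 4)` comparable
with `n`; the second makes the error of `centering` at most half of the allowed deviation. -/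
lemma one_sub_Pn_le : ∃ D : ℝ, 0 ≤ D ∧ ∀ n : ℕ, 1 ≤ n → 4 * D * (n : ℝ) ^ (3 / 4 : ℝ) ≤ n →
    (269 + D) * (n : ℝ) ^ (-(1 / 6) : ℝ) ≤ (n : ℝ) ^ (-(1 / 30) : ℝ) / 2 →
    1 - Pn n (fun lam =>
        |(∑ k ∈ Finset.Ioc (Kn n) n, 2 * (X lam k : ℝ) / k)
          - Real.log (Real.sqrt (3 * n) / (Kn n))
          + Real.eulerMascheroniConstant| ≤ (n : ℝ) ^ (-(1 / 30) : ℝ)) ≤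
      4 * n * Real.exp (4 * D * (n : ℝ) ^ (1 / 4 : ℝ) - (n : ℝ) ^ (4 / 15 : ℝ) / 128) := by
  obtain ⟨C, hC, hmean⟩ := mean_size
  -- below, the mean size is within `4 * C * V + 128 * V` of `n - D * V`, and the Chebyshev window has
  -- radius `16 * V`; the total is `D * V`
  refine ⟨4 * C + 144, by positivity, fun n hn hD4 hcent => ?_⟩
  set D := 4 * C + 144 with hDdef
  have hD : 0 ≤ D := by positivity
  classical
  obtain ⟨hK1, hKn, hKle, hKge⟩ := Kn_bounds hn
  have hn1 : (1 : ℝ) ≤ n := by exact_mod_cast hn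
  have hn0 : (0 : ℝ) < n := by linarith
  have hK0 : (0 : ℝ) < Kn n := by exact_mod_cast hK1
  have hcen := (centering hn hD hD4).trans hcent
  set V := (n : ℝ) ^ (3 / 4 : ℝ) with hV
  have hV0 : 0 < V := by positivity
  have hx0 : 0 < (n : ℝ) - D * V := by nlinarith
  obtain ⟨ta, tb⟩ := temp_bounds (x := n - D * V) hn0 (by linarith) (by nlinarith)
  set a := temp (n - D * V) with ha
  have ha0 : 0 < a := lt_of_lt_of_le (by positivity) ta
  have hm := hmean a n ha0 hn
  rw [temp_sq hx0] at hm
  have c1 : C * a ^ (-(3 / 2) : ℝ) ≤ 4 * C * V := by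
    have h1 : a ^ (-(3 / 2) : ℝ) ≤ (1 / 2 * (n : ℝ) ^ (-(1 / 2) : ℝ)) ^ (-(3 / 2) : ℝ) :=
      Real.rpow_le_rpow_of_nonpos (by positivity) ta (by norm_num)
    have h2 : (1 / 2 * (n : ℝ) ^ (-(1 / 2) : ℝ)) ^ (-(3 / 2) : ℝ) ≤ 4 * V := by
      rw [Real.mul_rpow (by norm_num) (by positivity), ← Real.rpow_mul hn0.le]
      have e : (-(1 / 2) : ℝ) * -(3 / 2) = 3 / 4 := by norm_num
      rw [e, ← hV]
      gcongr
      rw [one_div, Real.inv_rpow (by norm_num), Real.rpow_neg (by norm_num), inv_inv]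
      calc (2 : ℝ) ^ (3 / 2 : ℝ) ≤ 2 ^ (2 : ℝ) :=
            Real.rpow_le_rpow_of_exponent_le (by norm_num) (by norm_num)
        _ = 4 := by norm_num
    nlinarith [mul_le_mul_of_nonneg_left (h1.trans h2) hC]
  have hVV : V ^ 2 = (n : ℝ) ^ (3 / 2 : ℝ) := by
    rw [hV, ← Real.rpow_natCast, ← Real.rpow_mul hn0.le]; norm_num
  have c2 : 16 / a ^ 3 ≤ 128 * V ^ 2 := by
    have h1 : (1 / 2 * (n : ℝ) ^ (-(1 / 2) : ℝ)) ^ 3 ≤ a ^ 3 := by gcongr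
    have h2 : (1 / 2 * (n : ℝ) ^ (-(1 / 2) : ℝ)) ^ 3 = 1 / (8 * V ^ 2) := by
      rw [mul_pow, ← Real.rpow_natCast ((n : ℝ) ^ (-(1 / 2) : ℝ)), ← Real.rpow_mul hn0.le, hVV]
      have e : (-(1 / 2) : ℝ) * ((3 : ℕ) : ℝ) = -(3 / 2) := by norm_num
      rw [e, Real.rpow_neg hn0.le]
      field_simp; norm_num
    rw [h2] at h1
    calc 16 / a ^ 3 ≤ 16 / (1 / (8 * V ^ 2)) := by gcongr
      _ = _ := by field_simp; norm_num
  have c3 : 16 / (n * a ^ 3) ≤ 128 * V := by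
    have h1 : V ≤ n := by
      rw [hV]
      simpa using Real.rpow_le_rpow_of_exponent_le hn1 (by norm_num : (3 / 4 : ℝ) ≤ 1)
    calc 16 / (n * a ^ 3) = 16 / a ^ 3 / n := by field_simp
      _ ≤ 128 * V ^ 2 / n := by gcongr
      _ ≤ 128 * V := by rw [div_le_iff₀ hn0]; nlinarith
  have hvar : 2 * ∑ k ∈ Ioc 0 n, Real.exp (-(a * k)) * (k : ℝ) ^ 2 ≤ (16 * V) ^ 2 := by
    have := sq_sum_le ha0 n
    nlinarith
  set M := ∑ k ∈ Ioc 0 n, occ a k * k with hM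
  rw [abs_le] at hm
  have hDV : D * V = 4 * C * V + 144 * V := by rw [hDdef]; ring
  have hMup : M + 16 * V ≤ n := by linarith [hm.2]
  have hMlo : n - 2 * (D * V) ≤ M - 16 * V := by linarith [hm.1]
  have hMpos : 16 * V < M := by linarith
  -- `t` minimises the Chernoff exponent `4 * t ^ 2 / K - t * s`
  set s := (n : ℝ) ^ (-(1 / 30) : ℝ) / 2 with hs
  have hs0 : 0 < s := by positivity
  have hs1 : s ≤ 1 := by
    have : (n : ℝ) ^ (-(1 / 30) : ℝ) ≤ 1 := Real.rpow_le_one_of_one_le_of_nonpos hn1 (by norm_num)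
    linarith
  set t := s * Kn n / 8 with ht
  have ht0 : 0 < t := by positivity
  have hc : ∀ k ∈ Ioc 0 n, |t * coeff (Kn n) k| ≤ 1 := by
    intro k _
    rw [abs_mul, abs_of_pos ht0]
    calc t * |coeff (Kn n) k| ≤ t * (2 / Kn n) := by gcongr; exact abs_coeff_le hK1 k
      _ = s / 4 := by rw [ht]; field_simp; norm_num
      _ ≤ 1 := by linarith
  have hE : t ^ 2 * ∑ k ∈ Ioc 0 n, coeff (Kn n) k ^ 2 - t * s ≤ -((n : ℝ) ^ (4 / 15 : ℝ) / 128) := by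
    have h1 : t ^ 2 * ∑ k ∈ Ioc 0 n, coeff (Kn n) k ^ 2 ≤ t ^ 2 * (4 / Kn n) := by
      gcongr; exact sum_coeff_sq hK1 hKn
    have h2 : t ^ 2 * (4 / Kn n) - t * s = -(s ^ 2 * Kn n / 16) := by
      rw [ht]; field_simp; ring
    have h3 : s ^ 2 = (n : ℝ) ^ (-(1 / 15) : ℝ) / 4 := by
      rw [hs, div_pow, ← Real.rpow_natCast, ← Real.rpow_mul hn0.le]; norm_num
    have h4 : (n : ℝ) ^ (4 / 15 : ℝ) / 128 ≤ s ^ 2 * Kn n / 16 := by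
      rw [h3, ← rpow_split hn0 (by norm_num : (-(1 / 15) : ℝ) + 1 / 3 = 4 / 15)]
      have : 0 < (n : ℝ) ^ (-(1 / 15) : ℝ) := by positivity
      nlinarith
    linarith
  set μ := Real.log (Real.sqrt (3 * n) / (Kn n)) - Real.eulerMascheroniConstant with hμ
  set B : Finset (Finset ℕ) := {A ∈ sumSets n n | 2 * s < |∑ k ∈ A, coeff (Kn n) k - μ|} with hB
  have hbound := bad_le (coeff (Kn n)) ha0 ht0.le hc hE (by positivity : 0 < 16 * V) hvar hMup hMpos
    B (Finset.filter_subset _ _) (fun A hA => by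
      have h1 := (Finset.mem_filter.1 hA).2
      rw [sum_coeff_mul]
      have h2 : |∑ k ∈ Ioc (Kn n) n, occ a k * (2 / k) - μ| ≤ s := by
        rw [hμ, ← sub_add]; exact hcen
      have h3 := abs_sub_le (∑ k ∈ A, coeff (Kn n) k)
        (∑ k ∈ Ioc (Kn n) n, occ a k * (2 / k)) μ
      linarith)
  have hexp : a * (n - (M - 16 * V)) + -((n : ℝ) ^ (4 / 15 : ℝ) / 128) ≤
      4 * D * (n : ℝ) ^ (1 / 4 : ℝ) - (n : ℝ) ^ (4 / 15 : ℝ) / 128 := by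
    have h1 : a * (n - (M - 16 * V)) ≤ 2 * (n : ℝ) ^ (-(1 / 2) : ℝ) * (2 * (D * V)) := by
      refine mul_le_mul tb (by linarith) (by linarith) (by positivity)
    have h2 : (n : ℝ) ^ (-(1 / 2) : ℝ) * V = (n : ℝ) ^ (1 / 4 : ℝ) :=
      rpow_split hn0 (by norm_num)
    have h3 : 2 * (n : ℝ) ^ (-(1 / 2) : ℝ) * (2 * (D * V)) = 4 * D * (n : ℝ) ^ (1 / 4 : ℝ) := by
      rw [← h2]; ring
    linarith
  have hd := card_sumSets_le_distincts n
  have hdpos : 0 < #(Nat.Partition.distincts n) := by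
    refine lt_of_lt_of_le (Finset.card_pos.2 ⟨{n}, mem_sumSets.2 ⟨?_, by simp⟩⟩) hd
    simp; omega
  have hd' : (0 : ℝ) < #(Nat.Partition.distincts n) := by exact_mod_cast hdpos
  set P : Nat.Partition n → Prop := fun lam =>
        |(∑ k ∈ Finset.Ioc (Kn n) n, 2 * (X lam k : ℝ) / k)
          - Real.log (Real.sqrt (3 * n) / (Kn n))
          + Real.eulerMascheroniConstant| ≤ (n : ℝ) ^ (-(1 / 30) : ℝ) with hP
  have hbadc : #{lam ∈ Nat.Partition.distincts n | ¬ P lam} ≤ #B := by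
    refine card_distincts_filter_le _ _ fun lam hlam hnP => ?_
    simp only [hP, not_le] at hnP
    rw [sum_X_eq hlam, sub_add, ← hμ] at hnP
    rw [hs]; linarith
  have hPn : 1 - Pn n P = (#{lam ∈ Nat.Partition.distincts n | ¬ P lam} : ℝ) /
      #(Nat.Partition.distincts n) := by
    have h1 := Finset.card_filter_add_card_filter_not (s := Nat.Partition.distincts n) P
    have h2 : (#{lam ∈ Nat.Partition.distincts n | P lam} : ℝ) +
      #{lam ∈ Nat.Partition.distincts n | ¬ P lam} = #(Nat.Partition.distincts n) := by
      exact_mod_cast h1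
    have h3 : Pn n P = (#{lam ∈ Nat.Partition.distincts n | P lam} : ℝ) /
      #(Nat.Partition.distincts n) := by
      unfold Pn
      congr!
    rw [h3, eq_div_iff hd'.ne', sub_mul, div_mul_cancel₀ _ hd'.ne']
    linarith
  rw [hPn, div_le_iff₀ hd']
  calc (#{lam ∈ Nat.Partition.distincts n | ¬ P lam} : ℝ) ≤ #B := by exact_mod_cast hbadc
    _ ≤ _ := hbound
    _ ≤ _ := by gcongr

end

theorem large_parts_concentration :
    Tendsto
      (fun n : ℕ => Pn n (fun lam =>
        |(∑ k ∈ Finset.Ioc (Kn n) n, 2 * (X lam k : ℝ) / k)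
          - Real.log (Real.sqrt (3 * n) / (Kn n))
          + Real.eulerMascheroniConstant| ≤ (n : ℝ) ^ (-(1 / 30) : ℝ)))
      atTop (nhds 1) := by
  obtain ⟨D, hD, hmain⟩ := one_sub_Pn_le
  have hcast : Tendsto (fun n : ℕ => (n : ℝ)) atTop atTop := tendsto_natCast_atTop_atTop
  have small : ∀ p : ℝ, 0 < p → ∀ c : ℝ, ∀ᶠ n : ℕ in atTop, c ≤ (n : ℝ) ^ p := fun p hp c =>
    ((tendsto_rpow_atTop hp).comp hcast).eventually_ge_atTop c
  -- `4 n exp (- n^(4/15) / 256)` tends to `0`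
  have hlim : Tendsto (fun n : ℕ => 4 * (((n : ℝ) ^ (4 / 15 : ℝ)) ^ (15 / 4 : ℝ) *
      Real.exp (-(1 / 256) * (n : ℝ) ^ (4 / 15 : ℝ)))) atTop (nhds 0) := by
    have h := ((tendsto_rpow_mul_exp_neg_mul_atTop_nhds_zero (15 / 4) (1 / 256)
      (by norm_num)).comp ((tendsto_rpow_atTop (by norm_num : (0 : ℝ) < 4 / 15)).comp hcast)).const_mul 4
    rw [mul_zero] at h
    exact h
  have key : Tendsto (fun n : ℕ => 1 - 4 * (((n : ℝ) ^ (4 / 15 : ℝ)) ^ (15 / 4 : ℝ) *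
      Real.exp (-(1 / 256) * (n : ℝ) ^ (4 / 15 : ℝ)))) atTop (nhds 1) := by
    simpa using hlim.const_sub 1
  refine tendsto_of_tendsto_of_tendsto_of_le_of_le' key tendsto_const_nhds ?_ ?_
  · filter_upwards [eventually_ge_atTop 1, small (1 / 4) (by norm_num) (4 * D),
      small (2 / 15) (by norm_num) (2 * (269 + D)), small (1 / 60) (by norm_num) (1024 * D)]
      with n hn h1 h2 h3
    have hn1 : (1 : ℝ) ≤ n := by exact_mod_cast hn
    have hn0 : (0 : ℝ) < n := by linarith
    have g1 : 4 * D * (n : ℝ) ^ (3 / 4 : ℝ) ≤ n := by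
      calc 4 * D * (n : ℝ) ^ (3 / 4 : ℝ) ≤ (n : ℝ) ^ (1 / 4 : ℝ) * (n : ℝ) ^ (3 / 4 : ℝ) := by gcongr
        _ = n := by rw [rpow_split hn0 (r := 1) (by norm_num), Real.rpow_one]
    have g2 : (269 + D) * (n : ℝ) ^ (-(1 / 6) : ℝ) ≤ (n : ℝ) ^ (-(1 / 30) : ℝ) / 2 := by
      have : 2 * (269 + D) * (n : ℝ) ^ (-(1 / 6) : ℝ) ≤
          (n : ℝ) ^ (2 / 15 : ℝ) * (n : ℝ) ^ (-(1 / 6) : ℝ) := by gcongr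
      rw [rpow_split hn0 (r := -(1 / 30)) (by norm_num)] at this
      linarith
    have g3 : 4 * D * (n : ℝ) ^ (1 / 4 : ℝ) ≤ (n : ℝ) ^ (4 / 15 : ℝ) / 256 := by
      have : 1024 * D * (n : ℝ) ^ (1 / 4 : ℝ) ≤
          (n : ℝ) ^ (1 / 60 : ℝ) * (n : ℝ) ^ (1 / 4 : ℝ) := by gcongr
      rw [rpow_split hn0 (r := 4 / 15) (by norm_num)] at this
      linarith
    have hm := hmain n hn g1 g2
    have g4 : Real.exp (4 * D * (n : ℝ) ^ (1 / 4 : ℝ) - (n : ℝ) ^ (4 / 15 : ℝ) / 128) ≤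
        Real.exp (-(1 / 256) * (n : ℝ) ^ (4 / 15 : ℝ)) := Real.exp_le_exp.2 (by linarith)
    have g5 : ((n : ℝ) ^ (4 / 15 : ℝ)) ^ (15 / 4 : ℝ) = n := by
      rw [← Real.rpow_mul hn0.le]; norm_num
    rw [g5]
    have g6 : 4 * n * Real.exp (4 * D * (n : ℝ) ^ (1 / 4 : ℝ) - (n : ℝ) ^ (4 / 15 : ℝ) / 128) ≤
        4 * n * Real.exp (-(1 / 256) * (n : ℝ) ^ (4 / 15 : ℝ)) := by gcongr
    linarith
  · refine Eventually.of_forall fun n => ?_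
    refine div_le_one_of_le₀ ?_ (Nat.cast_nonneg _)
    exact_mod_cast Finset.card_filter_le _ _
end
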